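/- Let n be a positive integer and let F be a finite field of cardinality q with 3 dividing q−1. Let M ≤ GL_n(F) be the group of monomial matrices, i.e. invertible matrices having exactly one nonzero entry in each row and each column (so M ≅ GL_1(F) ≀ S_n). Then there exists a bijection between Irr_{3'}(GL_n(F)) and Irr_{3'}(M). -/

import Mathlib

open scoped Classical
open Matrix

noncomputable section

/-- The set of irreducible complex characters of a group `G`. -/
def Irr (G : Type) [Group G] : Set (G → ℂ) :=
  {χ | ∃ V : FDRep ℂ G, CategoryTheory.Simple V ∧ FDRep.character V = χ}

/-- The set of irreducible complex characters of `G` whose degree is coprime to `p`. -/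
def IrrCoprime (p : ℕ) (G : Type) [Group G] : Set (G → ℂ) :=
  {χ | ∃ V : FDRep ℂ G, CategoryTheory.Simple V ∧ FDRep.character V = χ ∧
    Nat.Coprime (Module.finrank ℂ V) p}

namespace GLMon

set_option linter.unusedSectionVars false
set_option linter.unusedVariables false

open CategoryTheory

section RepTheory

variable {G : Type} [Group G] [Fintype G]

/-- class functions -/
def IsClass (f : G → ℂ) : Prop := ∀ g h : G, f (h * g * h⁻¹) = f g

/-- the symmetric bilinear form on functions -/
def ip (f g : G → ℂ) : ℂ := (Nat.card G : ℂ)⁻¹ * ∑ x : G, f x * g x⁻¹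

lemma card_ne (G : Type) [Group G] [Fintype G] : (Nat.card G : ℂ) ≠ 0 := by
  simp

lemma irr_class {χ : G → ℂ} (h : χ ∈ Irr G) : IsClass χ := by
  obtain ⟨V, _, rfl⟩ := h
  intro g h
  exact V.char_conj g h

lemma irr_ip {χ ψ : G → ℂ} (h : χ ∈ Irr G) (h' : ψ ∈ Irr G) :
    ip χ ψ = if χ = ψ then 1 else 0 := by
  obtain ⟨V, hV, rfl⟩ := h
  obtain ⟨W, hW, rfl⟩ := h'
  have : Invertible (Nat.card G : ℂ) := invertibleOfNonzero (card_ne G)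
  have e1 := FDRep.char_orthonormal V W
  have e2 := FDRep.char_orthonormal V V
  rw [if_pos ⟨Iso.refl V⟩] at e2
  split_ifs with hc
  · unfold ip; rw [← hc]; exact e2
  · unfold ip; rw [e1, if_neg]
    rintro ⟨i⟩
    exact hc (FDRep.char_iso i)

lemma simple_of_irreducible {V : Type} [AddCommGroup V] [Module ℂ V] [Module.Finite ℂ V]
    (ρ : Representation ℂ G V) [ρ.IsIrreducible] : Simple (FDRep.of ρ) := by
  rw [FDRep.simple_iff_char_is_norm_one]
  have : Invertible (Nat.card G : ℂ) := invertibleOfNonzero (card_ne G)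
  have e := Representation.card_inv_mul_sum_char_mul_char_eq_finrank ρ ρ
  rw [Representation.IsIrreducible.finrank_intertwiningMap_self] at e
  have := card_ne G
  field_simp at e
  rw [Nat.card_eq_fintype_card]
  simp only [Nat.card_eq_fintype_card, Nat.cast_one, mul_one] at e
  exact e

/-- on a simple module, a central element with zero trace acts as zero -/
lemma simple_act_zero (S : Type) [AddCommGroup S] [Module (MonoidAlgebra ℂ G) S]
    [IsSimpleModule (MonoidAlgebra ℂ G) S] {F : G → ℂ}
    (h : ∀ χ ∈ Irr G, ip F χ = 0) (z : MonoidAlgebra ℂ G)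
    (hz : z = ∑ g : G, MonoidAlgebra.single g (F g⁻¹))
    (hcomm : ∀ y : MonoidAlgebra ℂ G, z * y = y * z) (s : S) : z • s = 0 := by
  let _ : Module ℂ S := Module.compHom S (algebraMap ℂ (MonoidAlgebra ℂ G))
  have : IsScalarTower ℂ (MonoidAlgebra ℂ G) S := ⟨fun a b c => by
    change _ = (algebraMap ℂ (MonoidAlgebra ℂ G) a) • (b • c)
    rw [← mul_smul, Algebra.smul_def]⟩
  let L : S →ₗ[MonoidAlgebra ℂ G] S :=
      { toFun := fun s => z • s
        map_add' := fun a b => smul_add _ _ _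
        map_smul' := fun a b => by
          simp only [RingHom.id_apply, ← mul_smul, hcomm] }
  have : FiniteDimensional ℂ S := Module.Finite.trans (MonoidAlgebra ℂ G) S
  let ρ : Representation ℂ G S := Representation.ofModule' S
  have hρ : ∀ r : MonoidAlgebra ℂ G, ∀ s : S, ρ.asAlgebraHom r s = r • s := by
    intro r s
    have : ρ.asAlgebraHom = Algebra.lsmul ℂ ℂ S := by
      simp [ρ, Representation.ofModule', Representation.asAlgebraHom]
    rw [this]; rfl
  let e : ρ.asModule ≃ₗ[MonoidAlgebra ℂ G] S :=
    { ρ.asModuleEquiv with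
      map_smul' := fun r x => by
        change ρ.asModuleEquiv (r • x) = r • ρ.asModuleEquiv x
        rw [Representation.asModuleEquiv_map_smul, hρ] }
  obtain ⟨c, hc⟩ := (IsSimpleModule.algebraMap_end_bijective_of_isAlgClosed
    (A := MonoidAlgebra ℂ G) (V := S) ℂ).2 L
  have hirr : ρ.IsIrreducible := by
    rw [Representation.irreducible_iff_isSimpleModule_asModule]
    exact IsSimpleModule.congr e
  have hs1 := simple_of_irreducible ρ
  have h0 := h _ ⟨_, hs1, rfl⟩
  have hz' : ρ.asAlgebraHom z = c • (1 : Module.End ℂ S) := by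
    ext m
    rw [hρ]
    change L m = _
    rw [← hc]; rfl
  have htr : LinearMap.trace ℂ _
      (ρ.asAlgebraHom z) = 0 := by
    rw [hz, map_sum, map_sum]
    simp only [Representation.asAlgebraHom_single, map_smul, smul_eq_mul]
    have hcc := card_ne G
    unfold ip at h0
    rw [mul_eq_zero, or_iff_right (by simp)] at h0
    rw [← h0]
    refine Fintype.sum_equiv (Equiv.inv G) _ _ ?_
    intro x
    simp only [Equiv.inv_apply, inv_inv]
    rfl
  rw [hz', map_smul, LinearMap.trace_one, smul_eq_mul, mul_eq_zero] at htr
  have hc0 : c = 0 := by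
    rcases htr with h | h
    · exact h
    · exfalso
      have hd : Module.finrank ℂ S = 0 := by
        exact_mod_cast h
      have := Module.finrank_zero_iff.1 hd
      have h3 : Nontrivial S := IsSimpleModule.nontrivial (MonoidAlgebra ℂ G) S
      exact not_subsingleton S this
  have : L s = 0 := by rw [← hc, hc0]; simp
  exact this

open MonoidAlgebra in
/-- completeness of irreducible characters -/
lemma complete {F : G → ℂ} (hF : IsClass F) (h : ∀ χ ∈ Irr G, ip F χ = 0) : F = 0 := by
  set z : MonoidAlgebra ℂ G := ∑ g : G, MonoidAlgebra.single g (F g⁻¹) with hz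
  have hcomm : ∀ y : MonoidAlgebra ℂ G, z * y = y * z := by
    intro y
    induction y using MonoidAlgebra.induction_linear with
    | zero => simp
    | add a b ha hb => rw [mul_add, add_mul, ha, hb]
    | single g a =>
      rw [hz, Finset.sum_mul, Finset.mul_sum]
      simp only [MonoidAlgebra.single_mul_single]
      refine Fintype.sum_equiv (MulAut.conj g⁻¹).toEquiv _ _ ?_
      intro x
      simp only [MulEquiv.toEquiv_eq_coe, MulEquiv.coe_toEquiv, MulAut.conj_apply, inv_inv]
      congr 1
      · group
      · rw [mul_comm]; congr 1
        have := hF x⁻¹ g⁻¹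
        rw [← this]; congr 1; group
  have key : ∀ S : Submodule (MonoidAlgebra ℂ G) (MonoidAlgebra ℂ G),
      IsSimpleModule (MonoidAlgebra ℂ G) S → ∀ s ∈ S, z * s = 0 := by
    intro S hS s hs
    have := simple_act_zero S h z hz hcomm ⟨s, hs⟩
    have := congrArg Subtype.val this
    simpa using this
  have hone : ∀ s : MonoidAlgebra ℂ G, z * s = 0 := by
    intro s
    let K : Submodule (MonoidAlgebra ℂ G) (MonoidAlgebra ℂ G) :=
      { carrier := {s | z * s = 0}
        add_mem' := fun {a b} ha hb => by
          simp only [Set.mem_ofPred_eq] at *; rw [mul_add, ha, hb, add_zero]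
        zero_mem' := by simp
        smul_mem' := fun a b hb => by
          simp only [Set.mem_ofPred_eq, smul_eq_mul] at *
          rw [← mul_assoc, hcomm, mul_assoc, hb, mul_zero] }
    have hK : K = ⊤ := by
      rw [eq_top_iff, ← IsSemisimpleModule.sSup_simples_eq_top]
      refine sSup_le ?_
      intro S hS s hs
      exact key S hS s hs
    have : s ∈ K := by rw [hK]; trivial
    exact this
  have h1 := hone 1
  rw [mul_one] at h1
  funext g
  have := congrArg (fun w : MonoidAlgebra ℂ G => w.coeff g⁻¹) h1
  rw [hz] at this
  simpa [MonoidAlgebra.coeff_sum, Finsupp.finsetSum_apply, Finsupp.single_apply] using this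

end RepTheory

section Mult

variable {G : Type} [Group G] [Fintype G]

lemma ip_sum_left {ι : Type} (s : Finset ι) (c : ι → ℂ) (f : ι → G → ℂ) (g : G → ℂ) :
    ip (∑ i ∈ s, c i • f i) g = ∑ i ∈ s, c i * ip (f i) g := by
  unfold ip
  simp only [Finset.sum_apply, Pi.smul_apply, smul_eq_mul, Finset.sum_mul, Finset.mul_sum]
  rw [Finset.sum_comm]
  refine Finset.sum_congr rfl fun i _ => Finset.sum_congr rfl fun x _ => by ring

lemma irr_indep : LinearIndependent ℂ (Subtype.val : Irr G → (G → ℂ)) := by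
  rw [linearIndependent_iff']
  intro s c h i hi
  have h1 := ip_sum_left s c (fun i : Irr G => (i : G → ℂ)) (i : G → ℂ)
  rw [h] at h1
  have h2 : ∀ j ∈ s, c j * ip (j : G → ℂ) (i : G → ℂ) = if j = i then c i else 0 := by
    intro j _
    rw [irr_ip j.2 i.2]
    by_cases hji : j = i
    · simp [hji]
    · rw [if_neg (fun h => hji (Subtype.ext h)), if_neg hji, mul_zero]
  rw [Finset.sum_congr rfl h2, Finset.sum_ite_eq' s i] at h1
  rw [if_pos hi] at h1
  rw [← h1]; simp [ip]

instance : Finite (Irr G) := irr_indep.finite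

instance : Fintype (Irr G) := Fintype.ofFinite _

lemma expand {F : G → ℂ} (hF : IsClass F) :
    F = ∑ χ : Irr G, ip F (χ : G → ℂ) • (χ : G → ℂ) := by
  rw [← sub_eq_zero]
  apply complete
  · intro g h
    simp only [Pi.sub_apply, Finset.sum_apply, Pi.smul_apply]
    rw [hF g h]
    congr 1
    refine Finset.sum_congr rfl fun χ _ => ?_
    rw [irr_class χ.2 g h]
  · intro ψ hψ
    have h1 := ip_sum_left Finset.univ (fun χ : Irr G => ip F (χ : G → ℂ))
      (fun i : Irr G => (i : G → ℂ)) ψ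
    have h2 : ∀ χ ∈ (Finset.univ : Finset (Irr G)), ip F (χ : G → ℂ) * ip (χ : G → ℂ) ψ
        = if χ = ⟨ψ, hψ⟩ then ip F ψ else 0 := by
      intro χ _
      rw [irr_ip χ.2 hψ]
      by_cases hji : χ = ⟨ψ, hψ⟩
      · simp [hji]
      · rw [if_neg (fun h => hji (Subtype.ext h)), if_neg hji, mul_zero]
    rw [Finset.sum_congr rfl h2, Finset.sum_ite_eq' Finset.univ (⟨ψ, hψ⟩ : Irr G)] at h1
    rw [if_pos (Finset.mem_univ _)] at h1
    have h3 : ∀ a b : G → ℂ, ip (a - b) ψ = ip a ψ - ip b ψ := by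
      intro a b
      simp [ip, sub_mul, Finset.sum_sub_distrib, mul_sub]
    rw [h3, h1, sub_self]

/-- multiplicity of a linear character of a subgroup in the restriction of `f` -/
def mult (P : Subgroup G) (l : P →* ℂˣ) (f : G → ℂ) : ℂ :=
  (Nat.card P : ℂ)⁻¹ * ∑ p : P, (l p : ℂ) * f (p : G)⁻¹

lemma mult_nat (P : Subgroup G) (l : P →* ℂˣ) {χ : G → ℂ} (h : χ ∈ Irr G) :
    ∃ k : ℕ, mult P l χ = k := by
  obtain ⟨V, _, rfl⟩ := h
  let ρ : Representation ℂ P V :=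
    { toFun := fun p => ((l p : ℂˣ) : ℂ)⁻¹ • V.ρ (p : G)
      map_one' := by simp
      map_mul' := fun p q => by
        ext v
        simp [smul_smul, mul_comm] }
  have : Invertible (Nat.card P : ℂ) := invertibleOfNonzero (card_ne P)
  refine ⟨Module.finrank ℂ ρ.invariants, ?_⟩
  rw [← Representation.card_inv_mul_sum_char_eq_finrank]
  unfold mult
  congr 1
  refine Fintype.sum_equiv (Equiv.inv P) _ _ ?_
  intro p
  simp only [Equiv.inv_apply, Representation.character]
  change _ = LinearMap.trace ℂ V (((l p⁻¹ : ℂˣ) : ℂ)⁻¹ • V.ρ ((p⁻¹ : P) : G))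
  rw [map_smul]
  simp [FDRep.character]

lemma mult_sum (P : Subgroup G) (l : P →* ℂˣ) {ι : Type} (s : Finset ι) (c : ι → ℂ)
    (f : ι → G → ℂ) : mult P l (∑ i ∈ s, c i • f i) = ∑ i ∈ s, c i * mult P l (f i) := by
  unfold mult
  simp only [Finset.sum_apply, Pi.smul_apply, smul_eq_mul, Finset.mul_sum]
  rw [Finset.sum_comm]
  refine Finset.sum_congr rfl fun i _ => Finset.sum_congr rfl fun x _ => by ring

/-- induced class function -/
def indc (P : Subgroup G) (l : P →* ℂˣ) (g : G) : ℂ :=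
  (Nat.card P : ℂ)⁻¹ * ∑ x : G, ∑ p : P, if (p : G) * x = x * g then (l p : ℂ) else 0

lemma indc_class (P : Subgroup G) (l : P →* ℂˣ) : IsClass (indc P l) := by
  intro g h
  unfold indc
  congr 1
  refine Fintype.sum_equiv (Equiv.mulRight h) _ _ ?_
  intro x
  refine Finset.sum_congr rfl fun p _ => ?_
  simp only [Equiv.coe_mulRight]
  congr 1
  rw [eq_iff_iff]
  constructor
  · intro e
    rw [← mul_assoc, e]; group
  · intro e
    have : (p : G) * x = (p * (x * h)) * h⁻¹ := by group
    rw [this, e]; group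

lemma ip_indc (P : Subgroup G) (l : P →* ℂˣ) {f : G → ℂ} (hf : IsClass f) :
    ip (indc P l) f = mult P l f := by
  unfold ip indc mult
  have : ∀ g : G, ((Nat.card P : ℂ)⁻¹ * ∑ x : G, ∑ p : P,
      if (p : G) * x = x * g then (l p : ℂ) else 0) * f g⁻¹ =
      (Nat.card P : ℂ)⁻¹ * ∑ x : G, ∑ p : P,
      if g = x⁻¹ * p * x then (l p : ℂ) * f (p : G)⁻¹ else 0 := by
    intro g
    rw [mul_assoc, Finset.sum_mul]
    congr 1
    refine Finset.sum_congr rfl fun x _ => ?_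
    rw [Finset.sum_mul]
    refine Finset.sum_congr rfl fun p _ => ?_
    have e : ((p : G) * x = x * g) ↔ g = x⁻¹ * p * x := by
      constructor
      · intro e; rw [mul_assoc, e]; group
      · intro e; rw [e]; group
    by_cases h : (p : G) * x = x * g
    · rw [if_pos h, if_pos (e.1 h)]
      rw [e.1 h]
      have := hf (p : G)⁻¹ x⁻¹
      rw [← this]; congr 2; group
    · rw [if_neg h, if_neg (fun h' => h (e.2 h')), zero_mul]
  rw [Finset.sum_congr rfl fun g _ => this g, ← Finset.mul_sum, Finset.sum_comm]
  have h2 : ∀ x : G, ∑ g : G, ∑ p : P,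
      (if g = x⁻¹ * p * x then (l p : ℂ) * f (p : G)⁻¹ else 0)
      = ∑ p : P, (l p : ℂ) * f (p : G)⁻¹ := by
    intro x
    rw [Finset.sum_comm]
    refine Finset.sum_congr rfl fun p _ => ?_
    rw [Finset.sum_ite_eq']; simp
  rw [Finset.sum_congr rfl fun x _ => h2 x]
  rw [Finset.sum_const, Finset.card_univ, nsmul_eq_mul, ← Nat.card_eq_fintype_card]
  have := card_ne G
  field_simp

/-- the kernel sum -/
def ker (P Q : Subgroup G) (l : P →* ℂˣ) (m : Q →* ℂˣ) : ℂ :=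
  (Nat.card P : ℂ)⁻¹ * (Nat.card Q : ℂ)⁻¹ * ∑ x : G, ∑ p : P, ∑ q : Q,
    if (p : G) * x = x * q then (l p : ℂ) * ((m q)⁻¹ : ℂˣ) else 0

lemma parseval (P Q : Subgroup G) (l : P →* ℂˣ) (m : Q →* ℂˣ) :
    ∑ χ : Irr G, mult P l χ * mult Q m χ = ker P Q l m := by
  have h1 := expand (indc_class P l)
  have h2 : mult Q m (indc P l) = ∑ χ : Irr G, mult P l χ * mult Q m χ := by
    conv_lhs => rw [h1]
    rw [mult_sum]
    refine Finset.sum_congr rfl fun χ _ => ?_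
    rw [ip_indc P l (irr_class χ.2)]
  rw [← h2]
  unfold mult indc ker
  simp only [Finset.mul_sum]
  rw [Finset.sum_comm]
  refine Finset.sum_congr rfl fun x _ => ?_
  rw [Finset.sum_comm]
  refine Finset.sum_congr rfl fun p _ => ?_
  refine Fintype.sum_equiv (Equiv.inv Q) _ _ ?_
  intro q
  simp only [Equiv.inv_apply, map_inv, inv_inv, Subgroup.coe_inv]
  split_ifs <;> ring

end Mult

section Dcl

variable {G : Type} [Group G] [Fintype G]

/-- double coset as a finset -/
def dcl (P Q : Subgroup G) (x : G) : Finset G :=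
  Finset.univ.filter fun y => ∃ p : P, ∃ q : Q, y = p * x * q

lemma mem_dcl {P Q : Subgroup G} {x y : G} :
    y ∈ dcl P Q x ↔ ∃ p : P, ∃ q : Q, y = p * x * q := by simp [dcl]

lemma dcl_self (P Q : Subgroup G) (x : G) : x ∈ dcl P Q x := by
  rw [mem_dcl]; exact ⟨1, 1, by simp⟩

lemma dcl_symm {P Q : Subgroup G} {x y : G} (h : y ∈ dcl P Q x) : x ∈ dcl P Q y := by
  rw [mem_dcl] at *
  obtain ⟨p, q, rfl⟩ := h
  exact ⟨p⁻¹, q⁻¹, by simp [mul_assoc]⟩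

lemma dcl_trans {P Q : Subgroup G} {x y z : G} (h : y ∈ dcl P Q x) (h' : z ∈ dcl P Q y) :
    z ∈ dcl P Q x := by
  rw [mem_dcl] at *
  obtain ⟨p, q, rfl⟩ := h
  obtain ⟨p', q', rfl⟩ := h'
  exact ⟨p' * p, q * q', by simp [mul_assoc]⟩

lemma dcl_eq {P Q : Subgroup G} {x y : G} (h : y ∈ dcl P Q x) : dcl P Q y = dcl P Q x := by
  ext z
  exact ⟨fun h' => dcl_trans h h', fun h' => dcl_trans (dcl_symm h) h'⟩

/-- admissibility -/
def adm (P Q : Subgroup G) (l : P →* ℂˣ) (m : Q →* ℂˣ) (x : G) : Prop :=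
  ∀ p : P, ∀ q : Q, (p : G) * x = x * q → l p = m q

lemma adm_dcl {P Q : Subgroup G} {l : P →* ℂˣ} {m : Q →* ℂˣ} {x y : G} (h : y ∈ dcl P Q x)
    (hx : adm P Q l m x) : adm P Q l m y := by
  rw [mem_dcl] at h
  obtain ⟨a, b, rfl⟩ := h
  intro p q e
  have h1 := hx (a⁻¹ * p * a) (b * q * b⁻¹) (by
    simp only [Subgroup.coe_mul, Subgroup.coe_inv]
    have : (p : G) = (a * x * b) * q * (a * x * b)⁻¹ := by rw [← e]; group
    rw [this]; group)
  simpa [mul_comm, mul_left_comm] using h1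

/-- the stabilizer of a point -/
def stb (P Q : Subgroup G) (x : G) : Finset (P × Q) :=
  Finset.univ.filter fun r => (r.1 : G) * x = x * r.2

lemma stb_card (P Q : Subgroup G) (x : G) :
    (stb P Q x).card * (dcl P Q x).card = Nat.card P * Nat.card Q := by
  have h1 := Finset.card_eq_sum_card_fiberwise (s := (Finset.univ : Finset (P × Q)))
    (t := dcl P Q x) (f := fun r => (r.1 : G) * x * (r.2 : G)⁻¹) (by
      intro r _
      simp only [Finset.mem_coe, mem_dcl]
      exact ⟨r.1, r.2⁻¹, by simp⟩)
  rw [Finset.card_univ, Fintype.card_prod, ← Nat.card_eq_fintype_card,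
    ← Nat.card_eq_fintype_card] at h1
  rw [h1, Finset.sum_const_nat (m := (stb P Q x).card)]
  · ring
  intro y hy
  rw [mem_dcl] at hy
  obtain ⟨a, b, rfl⟩ := hy
  symm
  refine Finset.card_bij (fun r _ => (a * r.1, b⁻¹ * r.2)) ?_ ?_ ?_
  · intro r hr
    simp only [stb, Finset.mem_filter, Finset.mem_univ, true_and] at hr ⊢
    simp only [Subgroup.coe_mul, Subgroup.coe_inv]
    rw [mul_assoc (a : G), hr]; group
  · intro r _ r' _ e
    simp only [Prod.mk.injEq, mul_right_inj] at e
    exact Prod.ext e.1 e.2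
  · intro r hr
    simp only [Finset.mem_filter, Finset.mem_univ, true_and] at hr
    refine ⟨(a⁻¹ * r.1, b * r.2), ?_, by simp⟩
    simp only [stb, Finset.mem_filter, Finset.mem_univ, true_and]
    simp only [Subgroup.coe_mul, Subgroup.coe_inv]
    have : (r.1 : G) * x = a * x * b * r.2 := by rw [← hr]; group
    rw [mul_assoc, this]; group

lemma stb_sum (P Q : Subgroup G) (l : P →* ℂˣ) (m : Q →* ℂˣ) (x : G) :
    (∑ r ∈ stb P Q x, ((l r.1 * (m r.2)⁻¹ : ℂˣ) : ℂ)) =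
      if adm P Q l m x then ((stb P Q x).card : ℂ) else 0 := by
  split_ifs with h
  · rw [Finset.sum_congr rfl (g := fun _ => (1 : ℂ))]
    · simp
    · intro r hr
      simp only [stb, Finset.mem_filter, Finset.mem_univ, true_and] at hr
      rw [h _ _ hr]; simp
  · unfold adm at h
    push Not at h
    obtain ⟨p, q, e, hne⟩ := h
    set S := (∑ r ∈ stb P Q x, ((l r.1 * (m r.2)⁻¹ : ℂˣ) : ℂ)) with hS
    have h2 : ((l p * (m q)⁻¹ : ℂˣ) : ℂ) * S = S := by
      rw [hS, Finset.mul_sum]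
      refine Finset.sum_bij (fun r _ => (p * r.1, q * r.2)) ?_ ?_ ?_ ?_
      · intro r hr
        simp only [stb, Finset.mem_filter, Finset.mem_univ, true_and] at hr ⊢
        simp only [Subgroup.coe_mul]
        rw [mul_assoc, hr, ← mul_assoc, e, mul_assoc]
      · intro r _ r' _ e
        simp only [Prod.mk.injEq, mul_right_inj] at e
        exact Prod.ext e.1 e.2
      · intro r hr
        simp only [stb, Finset.mem_filter, Finset.mem_univ, true_and] at hr
        refine ⟨(p⁻¹ * r.1, q⁻¹ * r.2), ?_, by simp⟩
        simp only [stb, Finset.mem_filter, Finset.mem_univ, true_and]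
        simp only [Subgroup.coe_mul, Subgroup.coe_inv]
        rw [mul_assoc, hr, inv_mul_eq_iff_eq_mul, ← mul_assoc, ← mul_assoc, e]; group
      · intro r hr
        simp only [map_mul, Units.val_mul, mul_inv]
        ring
    have h3 : (((l p * (m q)⁻¹ : ℂˣ) : ℂ) - 1) * S = 0 := by rw [sub_mul, h2]; ring
    rcases mul_eq_zero.1 h3 with h4 | h4
    · exfalso
      apply hne
      have : l p * (m q)⁻¹ = 1 := Units.ext (by simpa using sub_eq_zero.1 h4)
      exact mul_inv_eq_one.1 this
    · exact h4

lemma ker_eq (P Q : Subgroup G) (l : P →* ℂˣ) (m : Q →* ℂˣ) :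
    ker P Q l m = ∑ x : G, if adm P Q l m x then ((dcl P Q x).card : ℂ)⁻¹ else 0 := by
  unfold ker
  rw [Finset.mul_sum]
  refine Finset.sum_congr rfl fun x _ => ?_
  have h1 : (∑ p : P, ∑ q : Q,
    if (p : G) * x = x * q then (l p : ℂ) * ((m q)⁻¹ : ℂˣ) else 0) =
    ∑ r ∈ stb P Q x, ((l r.1 * (m r.2)⁻¹ : ℂˣ) : ℂ) := by
    rw [stb, Finset.sum_filter, Fintype.sum_prod_type]
    simp
  rw [h1, stb_sum]
  have h2 := stb_card P Q x
  have h3 : ((stb P Q x).card : ℂ) * ((dcl P Q x).card : ℂ) = Nat.card P * Nat.card Q := by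
    exact_mod_cast h2
  have h4 : ((dcl P Q x).card : ℂ) ≠ 0 := by
    have := Finset.card_pos.2 ⟨x, dcl_self P Q x⟩
    exact_mod_cast this.ne'
  have := card_ne P
  have := card_ne Q
  split_ifs
  · field_simp; exact h3
  · simp

lemma ker_zero (P Q : Subgroup G) (l : P →* ℂˣ) (m : Q →* ℂˣ) (h : ∀ x, ¬ adm P Q l m x) :
    ker P Q l m = 0 := by
  rw [ker_eq]; simp [h]

lemma ker_one (P Q : Subgroup G) (l : P →* ℂˣ) (m : Q →* ℂˣ) (x₀ : G) (h₀ : adm P Q l m x₀)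
    (h : ∀ x, adm P Q l m x → x ∈ dcl P Q x₀) : ker P Q l m = 1 := by
  rw [ker_eq]
  have h1 : ∀ x : G, (if adm P Q l m x then ((dcl P Q x).card : ℂ)⁻¹ else 0) =
      if x ∈ dcl P Q x₀ then ((dcl P Q x₀).card : ℂ)⁻¹ else 0 := by
    intro x
    by_cases hx : x ∈ dcl P Q x₀
    · rw [if_pos hx, if_pos (adm_dcl hx h₀), dcl_eq hx]
    · rw [if_neg hx, if_neg (fun h' => hx (h x h'))]
  rw [Finset.sum_congr rfl fun x _ => h1 x, ← Finset.sum_filter, Finset.filter_mem_eq_inter,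
    Finset.univ_inter, Finset.sum_const, nsmul_eq_mul, mul_inv_cancel₀]
  have := Finset.card_pos.2 ⟨x₀, dcl_self P Q x₀⟩
  exact_mod_cast this.ne'

lemma ker_compare {M : Type} [Group M] [Fintype M] (ι : M → G)
    (P Q : Subgroup G) (l : P →* ℂˣ) (m : Q →* ℂˣ)
    (P' Q' : Subgroup M) (l' : P' →* ℂˣ) (m' : Q' →* ℂˣ)
    (h1 : ∀ g : G, ∃ x : M, ι x ∈ dcl P Q g)
    (h2 : ∀ x y : M, ι y ∈ dcl P Q (ι x) ↔ y ∈ dcl P' Q' x)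
    (h3 : ∀ x : M, adm P Q l m (ι x) ↔ adm P' Q' l' m' x) :
    ker P Q l m = ker P' Q' l' m' := by
  have hG : ∀ g : G, ((dcl P Q g).card : ℂ) ≠ 0 := by
    intro g
    have := Finset.card_pos.2 ⟨g, dcl_self P Q g⟩
    exact_mod_cast this.ne'
  have hM : ∀ g : M, ((dcl P' Q' g).card : ℂ) ≠ 0 := by
    intro g
    have := Finset.card_pos.2 ⟨g, dcl_self P' Q' g⟩
    exact_mod_cast this.ne'
  rw [ker_eq, ker_eq]
  have e1 : ∀ g : G, (if adm P Q l m g then ((dcl P Q g).card : ℂ)⁻¹ else 0) =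
      ∑ x : M, if g ∈ dcl P Q (ι x) then
        (if adm P' Q' l' m' x then ((dcl P Q (ι x)).card : ℂ)⁻¹ * ((dcl P' Q' x).card : ℂ)⁻¹
          else 0) else 0 := by
    intro g
    obtain ⟨x₀, hx₀⟩ := h1 g
    have e2 : ∀ x : M, (if g ∈ dcl P Q (ι x) then
        (if adm P' Q' l' m' x then ((dcl P Q (ι x)).card : ℂ)⁻¹ * ((dcl P' Q' x).card : ℂ)⁻¹
          else 0) else 0) = if x ∈ dcl P' Q' x₀ then
          ((if adm P Q l m g then ((dcl P Q g).card : ℂ)⁻¹ else 0) *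
            ((dcl P' Q' x₀).card : ℂ)⁻¹) else 0 := by
      intro x
      by_cases hx : x ∈ dcl P' Q' x₀
      · have hx' := (h2 _ _).2 hx
        have hg : g ∈ dcl P Q (ι x) := dcl_symm (dcl_trans hx₀ hx')
        rw [if_pos hx, if_pos hg, dcl_eq hx, dcl_eq (dcl_symm hg)]
        by_cases ha : adm P Q l m g
        · rw [if_pos ha, if_pos ((h3 x).1 (adm_dcl (dcl_symm hg) ha))]
        · rw [if_neg ha, if_neg (fun h => ha (adm_dcl hg ((h3 x).2 h))), zero_mul]
      · rw [if_neg hx, if_neg]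
        intro hg
        apply hx
        rw [← h2]
        exact dcl_trans (dcl_symm hx₀) (dcl_symm hg)
    rw [Finset.sum_congr rfl fun x _ => e2 x, ← Finset.sum_filter, Finset.filter_mem_eq_inter,
      Finset.univ_inter, Finset.sum_const, nsmul_eq_mul]
    have := hM x₀
    field_simp
  rw [Finset.sum_congr rfl fun x _ => e1 x, Finset.sum_comm]
  refine Finset.sum_congr rfl fun x _ => ?_
  rw [← Finset.sum_filter, Finset.filter_mem_eq_inter,
      Finset.univ_inter, Finset.sum_const, nsmul_eq_mul]
  have := hG (ι x)
  have := hM x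
  split_ifs
  · field_simp
  · simp

end Dcl

section Mon

/-- the wreath product of `K` with the symmetric group, as an explicit structure -/
@[ext] structure Mon (K : Type) (n : ℕ) where
  /-- diagonal part -/
  t : Fin n → K
  /-- permutation part -/
  w : Equiv.Perm (Fin n)

variable {K : Type} [CommGroup K] {n : ℕ}

instance : Mul (Mon K n) := ⟨fun a b => ⟨fun i => a.t i * b.t (a.w.symm i), a.w * b.w⟩⟩
instance : One (Mon K n) := ⟨⟨fun _ => 1, 1⟩⟩
instance : Inv (Mon K n) := ⟨fun a => ⟨fun i => (a.t (a.w i))⁻¹, a.w⁻¹⟩⟩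

@[simp] lemma Mon.mul_t (a b : Mon K n) (i) : (a * b).t i = a.t i * b.t (a.w.symm i) := rfl
@[simp] lemma Mon.mul_w (a b : Mon K n) : (a * b).w = a.w * b.w := rfl
@[simp] lemma Mon.one_t (i) : (1 : Mon K n).t i = 1 := rfl
@[simp] lemma Mon.one_w : (1 : Mon K n).w = 1 := rfl
@[simp] lemma Mon.inv_t (a : Mon K n) (i) : (a⁻¹).t i = (a.t (a.w i))⁻¹ := rfl
@[simp] lemma Mon.inv_w (a : Mon K n) : (a⁻¹).w = a.w⁻¹ := rfl

instance : Group (Mon K n) where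
  mul_assoc a b c := by
    ext i
    · simp [mul_assoc, Equiv.Perm.mul_def]
    · simp
  one_mul a := by
    ext i
    · simp [Equiv.Perm.one_def]
    · simp
  mul_one a := by ext i <;> simp
  inv_mul_cancel a := by
    ext i
    · simp [Equiv.Perm.inv_def]
    · simp

/-- equivalence with the product -/
def monEquiv (K : Type) (n : ℕ) : Mon K n ≃ (Fin n → K) × Equiv.Perm (Fin n) where
  toFun a := (a.t, a.w)
  invFun p := ⟨p.1, p.2⟩
  left_inv _ := rfl
  right_inv _ := rfl

instance [Fintype K] : Fintype (Mon K n) := Fintype.ofEquiv _ (monEquiv K n).symm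

variable {L L' : Type}

/-- subgroup preserving a colouring -/
def Mc (K : Type) [CommGroup K] (c : Fin n → L) : Subgroup (Mon K n) where
  carrier := {m | ∀ i, c (m.w i) = c i}
  mul_mem' := by
    intro a b ha hb i
    simp only [Mon.mul_w, Equiv.Perm.mul_apply]
    rw [ha, hb]
  one_mem' := by intro i; rfl
  inv_mem' := by
    intro a ha i
    have := ha (a.w⁻¹ i)
    rw [Mon.inv_w, ← this]; simp

lemma mem_Mc {c : Fin n → L} {m : Mon K n} : m ∈ Mc K c ↔ ∀ i, c (m.w i) = c i := Iff.rfl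

lemma Mc_symm {c : Fin n → L} {m : Mon K n} (h : m ∈ Mc K c) (i) : c (m.w.symm i) = c i := by
  have := h (m.w.symm i)
  rw [← this, Equiv.apply_symm_apply]

/-- the linear character of `Mc` attached to `α` and a linear character `s` of the symmetric
group -/
def th (c : Fin n → L) (α : L → (K →* ℂˣ)) (s : Equiv.Perm (Fin n) →* ℂˣ) : Mc K c →* ℂˣ where
  toFun m := (∏ i, α (c i) (m.1.t i)) * s m.1.w
  map_one' := by simp
  map_mul' a b := by
    simp only [Subgroup.coe_mul, Mon.mul_t, Mon.mul_w, map_mul, Finset.prod_mul_distrib]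
    have : ∏ i, α (c i) (b.1.t (a.1.w.symm i)) = ∏ i, α (c i) (b.1.t i) := by
      rw [← Equiv.prod_comp a.1.w]
      refine Finset.prod_congr rfl fun i _ => ?_
      rw [Equiv.symm_apply_apply, a.2 i]
    rw [this]
    simp only [mul_left_comm, mul_assoc]

lemma th_apply (c : Fin n → L) (α : L → (K →* ℂˣ)) (s : Equiv.Perm (Fin n) →* ℂˣ)
    (m : Mc K c) : th c α s m = (∏ i, α (c i) (m.1.t i)) * s m.1.w := rfl

variable [Fintype K]

lemma mem_dcl_Mc {c : Fin n → L} {d : Fin n → L'} {x y : Mon K n} :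
    y ∈ dcl (Mc K c) (Mc K d) x ↔ ∃ u v : Equiv.Perm (Fin n), (∀ i, c (u i) = c i) ∧
      (∀ i, d (v i) = d i) ∧ y.w = u * x.w * v := by
  rw [mem_dcl]
  constructor
  · rintro ⟨p, q, rfl⟩
    exact ⟨p.1.w, q.1.w, p.2, q.2, rfl⟩
  · rintro ⟨u, v, hu, hv, e⟩
    let q : Mon K n := ⟨fun _ => 1, v⟩
    have hq : q ∈ Mc K d := hv
    have hp : y * (x * q)⁻¹ ∈ Mc K c := by
      have : (y * (x * q)⁻¹).w = u := by
        simp [e, q, mul_assoc]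
      intro i; rw [this]; exact hu i
    exact ⟨⟨_, hp⟩, ⟨q, hq⟩, by simp [mul_assoc]⟩

lemma adm_Mc {c : Fin n → L} {d : Fin n → L'} {α : L → (K →* ℂˣ)} {β : L' → (K →* ℂˣ)}
    {s s' : Equiv.Perm (Fin n) →* ℂˣ} {x : Mon K n} :
    adm (Mc K c) (Mc K d) (th c α s) (th d β s') x ↔
      (∀ i, α (c (x.w i)) = β (d i)) ∧ ∀ v : Equiv.Perm (Fin n), (∀ i, d (v i) = d i) →
        (∀ i, c (x.w (v i)) = c (x.w i)) → s v = s' v := by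
  have key : (∀ i, α (c (x.w i)) = β (d i)) → ∀ (p : Mc K c) (q : Mc K d),
      (p : Mon K n) * x = x * q → (∏ i, α (c i) (p.1.t i)) = ∏ i, β (d i) (q.1.t i) := by
    intro h p q e
    have e1 : ∀ i, p.1.t i * x.t (p.1.w.symm i) = x.t i * q.1.t (x.w.symm i) := fun i =>
      congrFun (congrArg Mon.t e) i
    have e2 : ∏ i, α (c i) (p.1.t i * x.t (p.1.w.symm i)) =
      ∏ i, α (c i) (x.t i * q.1.t (x.w.symm i)) := Finset.prod_congr rfl fun i _ => by rw [e1]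
    simp only [map_mul, Finset.prod_mul_distrib] at e2
    have e3 : ∏ i, α (c i) (x.t (p.1.w.symm i)) = ∏ i, α (c i) (x.t i) := by
      rw [← Equiv.prod_comp p.1.w]
      refine Finset.prod_congr rfl fun i _ => ?_
      rw [Equiv.symm_apply_apply, p.2 i]
    have e4 : ∏ i, α (c i) (q.1.t (x.w.symm i)) = ∏ i, β (d i) (q.1.t i) := by
      rw [← Equiv.prod_comp x.w]
      refine Finset.prod_congr rfl fun i _ => ?_
      rw [Equiv.symm_apply_apply, h i]
    rw [e3, e4, mul_comm] at e2
    exact mul_left_cancel e2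
  have hs : ∀ (p : Mc K c) (q : Mc K d), (p : Mon K n) * x = x * q → s p.1.w = s q.1.w := by
    intro p q e
    have : p.1.w * x.w = x.w * q.1.w := congrArg Mon.w e
    have := congrArg s this
    rw [map_mul, map_mul, mul_comm] at this
    exact mul_left_cancel this
  constructor
  · intro h
    have h1 : ∀ i, α (c (x.w i)) = β (d i) := by
      intro i
      ext1 a
      let q : Mon K n := ⟨Pi.mulSingle i a, 1⟩
      let p : Mon K n := ⟨Pi.mulSingle (x.w i) a, 1⟩
      have hq : q ∈ Mc K d := fun _ => rfl
      have hp : p ∈ Mc K c := fun _ => rfl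
      have := h ⟨p, hp⟩ ⟨q, hq⟩ (by
        ext j
        · simp only [Mon.mul_t, p, q]
          rw [mul_comm]
          congr 1
          by_cases hj : j = x.w i
          · subst hj; simp
          · rw [Pi.mulSingle_eq_of_ne hj, Pi.mulSingle_eq_of_ne]
            intro h; exact hj (by rw [← h]; simp)
        · simp [p, q])
      rw [th_apply, th_apply] at this
      simp only [p, q, map_one, mul_one] at this
      rw [Finset.prod_eq_single (x.w i), Finset.prod_eq_single i] at this
      · simpa using this
      · intro b _ hb; rw [Pi.mulSingle_eq_of_ne hb, map_one]
      · simp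
      · intro b _ hb; rw [Pi.mulSingle_eq_of_ne hb, map_one]
      · simp
    refine ⟨h1, fun v hv hv' => ?_⟩
    let q : Mon K n := ⟨fun _ => 1, v⟩
    have hq : q ∈ Mc K d := hv
    have hp : x * q * x⁻¹ ∈ Mc K c := by
      intro i
      have := hv' (x.w⁻¹ i)
      simpa [q] using this
    have e : (x * q * x⁻¹) * x = x * q := by simp
    have h2 := h ⟨_, hp⟩ ⟨_, hq⟩ e
    rw [th_apply, th_apply, key h1 ⟨_, hp⟩ ⟨_, hq⟩ e] at h2
    have h3 := mul_left_cancel h2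
    rw [hs ⟨_, hp⟩ ⟨_, hq⟩ e] at h3
    exact h3
  · rintro ⟨h1, h2⟩ p q e
    rw [th_apply, th_apply, key h1 _ _ e, hs _ _ e]
    congr 1
    apply h2 _ q.2
    intro i
    have : x.w (q.1.w i) = p.1.w (x.w i) := by
      have : p.1.w * x.w = x.w * q.1.w := congrArg Mon.w e
      exact (congrArg (fun f => f i) this).symm
    rw [this]; exact p.2 _

lemma adm_Mc_one {c : Fin n → L} {d : Fin n → L'} {α : L → (K →* ℂˣ)} {β : L' → (K →* ℂˣ)}
    {x : Mon K n} :
    adm (Mc K c) (Mc K d) (th c α 1) (th d β 1) x ↔ ∀ i, α (c (x.w i)) = β (d i) := by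
  rw [adm_Mc]; simp

end Mon

section GSide

variable {F : Type} [Field F] {n : ℕ} {L L' : Type} [LinearOrder L] [LinearOrder L']

/-- block triangular subgroup -/
def Pc (F : Type) [Field F] (c : Fin n → L) : Subgroup (GL (Fin n) F) where
  carrier := {g | (g : Matrix (Fin n) (Fin n) F).BlockTriangular c}
  mul_mem' := by
    intro a b ha hb
    exact Matrix.BlockTriangular.mul ha hb
  one_mem' := Matrix.blockTriangular_one
  inv_mem' := by
    intro a ha
    have ha' : (a : Matrix (Fin n) (Fin n) F).BlockTriangular c := ha
    have : ((a⁻¹ : GL (Fin n) F) : Matrix (Fin n) (Fin n) F).BlockTriangular c := by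
      rw [Matrix.coe_units_inv]
      have := a.isUnit.invertible
      exact Matrix.blockTriangular_inv_of_blockTriangular ha'
    exact this

lemma mem_Pc {c : Fin n → L} {g : GL (Fin n) F} :
    g ∈ Pc F c ↔ ∀ i j, c j < c i → g.1 i j = 0 :=
  ⟨fun h i j => @h i j, fun h i j => h i j⟩

lemma tsb_mul {A B : Matrix (Fin n) (Fin n) F} {c : Fin n → L} (hA : A.BlockTriangular c)
    (hB : B.BlockTriangular c) (k : L) :
    (A * B).toSquareBlock c k = A.toSquareBlock c k * B.toSquareBlock c k := by
  ext i j
  simp only [Matrix.toSquareBlock_def, Matrix.mul_apply, Matrix.of_apply]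
  have : ∀ x : Fin n, x ∉ Finset.univ.filter (fun a => c a = k) → A i x * B x j = 0 := by
    intro x hx
    simp only [Finset.mem_filter, Finset.mem_univ, true_and] at hx
    rcases lt_or_gt_of_ne hx with h | h
    · rw [hA (by rw [i.2]; exact h), zero_mul]
    · rw [hB (by rw [j.2]; exact h), mul_zero]
  rw [← Finset.sum_subset (Finset.subset_univ (Finset.univ.filter (fun a => c a = k)))
    (fun x _ hx => this x hx)]
  exact (Finset.sum_subtype _ (by simp) _)

/-- determinant of a diagonal block -/
def dblk (c : Fin n → L) (k : L) : Pc F c →* Fˣ :=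
  MonoidHom.toHomUnits
    { toFun := fun p => ((p : GL (Fin n) F).1.toSquareBlock c k).det
      map_one' := by
        have : ((1 : Matrix (Fin n) (Fin n) F).toSquareBlock c k) = 1 := by
          ext i j
          simp [Matrix.toSquareBlock_def, Matrix.one_apply, Subtype.ext_iff]
        simp [this]
      map_mul' := by
        intro a b
        rw [← Matrix.det_mul, ← tsb_mul a.2 b.2]
        rfl }

lemma dblk_val (c : Fin n → L) (k : L) (p : Pc F c) :
    (dblk c k p : F) = ((p : GL (Fin n) F).1.toSquareBlock c k).det := rfl

/-- linear character of the parabolic -/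
def chi [Fintype L] (c : Fin n → L) (α : L → (Fˣ →* ℂˣ)) : Pc F c →* ℂˣ where
  toFun p := ∏ k, α k (dblk c k p)
  map_one' := by simp
  map_mul' a b := by simp [Finset.prod_mul_distrib]

lemma chi_apply [Fintype L] (c : Fin n → L) (α : L → (Fˣ →* ℂˣ)) (p : Pc F c) :
    chi c α p = ∏ k, α k (dblk c k p) := rfl

/-- blocks of a coarsening -/
lemma det_coarse {R L : Type} [LinearOrder L] [LinearOrder R] [Fintype R] {A : Matrix (Fin n) (Fin n) F}
    {r : Fin n → R} (hA : A.BlockTriangular r) (f : R → L) (k : L) :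
    (A.toSquareBlock (f ∘ r) k).det =
      ∏ ρ, if f ρ = k then (A.toSquareBlock r ρ).det else 1 := by
  have h1 : (A.toSquareBlock (f ∘ r) k).BlockTriangular (fun i => r i.1) := by
    intro i j hij
    exact hA hij
  rw [h1.det_fintype]
  refine Finset.prod_congr rfl fun ρ _ => ?_
  split_ifs with h
  · let e : {a : {a // (f ∘ r) a = k} // r a.1 = ρ} ≃ {a // r a = ρ} :=
      { toFun := fun a => ⟨a.1.1, a.2⟩
        invFun := fun a => ⟨⟨a.1, by simp [a.2, h]⟩, a.2⟩
        left_inv := fun _ => rfl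
        right_inv := fun _ => rfl }
    rw [← Matrix.det_reindex_self e]
    rfl
  · have : IsEmpty {a : {a // (f ∘ r) a = k} // r a.1 = ρ} := by
      constructor
      rintro ⟨⟨a, ha⟩, hb⟩
      simp only [Function.comp_apply] at ha
      simp only at hb
      rw [hb] at ha
      exact h ha
    exact Matrix.det_isEmpty

/-- embedding of the monomial group -/
def io (F : Type) [Field F] (n : ℕ) : Mon Fˣ n →* GL (Fin n) F where
  toFun x :=
    { val := Matrix.of fun i j => if i = x.w j then (x.t i : F) else 0
      inv := Matrix.of fun i j => if j = x.w i then ((x.t j)⁻¹ : Fˣ).val else 0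
      val_inv := by
        ext i j
        simp only [Matrix.mul_apply, Matrix.of_apply]
        rw [Finset.sum_eq_single (x.w.symm i)]
        · by_cases h : i = j
          · subst h; simp
          · simp [h, Ne.symm h]
        · intro b _ hb
          rw [if_neg, zero_mul]
          rintro rfl; simp at hb
        · simp
      inv_val := by
        ext i j
        simp only [Matrix.mul_apply, Matrix.of_apply]
        rw [Finset.sum_eq_single (x.w i)]
        · by_cases h : i = j
          · subst h; simp
          · simp [h]
        · intro b _ hb
          rw [if_neg hb, zero_mul]
        · simp }
  map_one' := by
    ext i j
    by_cases h : i = j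
    · subst h; simp
    · simp [h]
  map_mul' x y := by
    ext i j
    simp only [Matrix.of_apply, Units.val_mul, Matrix.mul_apply, Mon.mul_t, Mon.mul_w]
    rw [Finset.sum_eq_single (y.w j)]
    · by_cases h : i = x.w (y.w j)
      · have h' : i = (x.w * y.w) j := h
        rw [if_pos h', if_pos h, if_pos rfl, h]; simp
      · have h' : ¬ i = (x.w * y.w) j := h
        rw [if_neg h', if_neg h, zero_mul]
    · intro b _ hb
      rw [if_neg hb, mul_zero]
    · simp

lemma io_apply (x : Mon Fˣ n) (i j) : (io F n x).1 i j = if i = x.w j then (x.t i : F) else 0 :=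
  rfl

lemma io_Mc {c : Fin n → L} {m : Mon Fˣ n} (h : m ∈ Mc Fˣ c) : io F n m ∈ Pc F c := by
  rw [mem_Pc]
  intro i j hij
  rw [io_apply, if_neg]
  rintro rfl
  rw [h j] at hij
  exact lt_irrefl _ hij

lemma io_inj : Function.Injective (io F n) := by
  intro x y h
  have e : ∀ i j, (if i = x.w j then (x.t i : F) else 0) = if i = y.w j then (y.t i : F) else 0 :=
    fun i j => by rw [← io_apply, ← io_apply, h]
  have hw : x.w = y.w := by
    ext1 j
    have := e (x.w j) j
    rw [if_pos rfl] at this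
    by_contra h
    rw [if_neg h] at this
    exact (x.t _).ne_zero this
  ext i
  · have := e i (x.w.symm i)
    simpa [hw] using this
  · rw [hw]

lemma io_surj {g : GL (Fin n) F} (h : ∀ s, ∃ i, g.1 i s ≠ 0 ∧ (∀ i', i' ≠ i → g.1 i' s = 0) ∧
    (∀ s', s' ≠ s → g.1 i s' = 0)) : ∃ x, io F n x = g := by
  choose w h1 h2 h3 using h
  have hw : Function.Injective w := by
    intro s s' e
    by_contra hne
    exact h1 s' (by rw [← e]; exact h3 s s' (Ne.symm hne))
  let W : Equiv.Perm (Fin n) := Equiv.ofBijective w (Finite.injective_iff_bijective.1 hw)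
  refine ⟨⟨fun i => Units.mk0 (g.1 i (W.symm i)) ?_, W⟩, ?_⟩
  · have := h1 (W.symm i)
    have e : w (W.symm i) = i := W.apply_symm_apply i
    rwa [e] at this
  · ext i j
    rw [io_apply]
    have hW : W j = w j := rfl
    by_cases h : i = W j
    · subst h; simp
    · simp only [h, if_false]
      exact (h2 j i (by rwa [← hW])).symm

end GSide

section Bruhat

variable {F : Type} [Field F] {n : ℕ} {L L' : Type} [LinearOrder L] [LinearOrder L']

/-- rank one perturbation of the identity -/
def tvec (v u : Fin n → F) (h : u ⬝ᵥ v = 0) : GL (Fin n) F where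
  val := 1 + Matrix.vecMulVec v u
  inv := 1 - Matrix.vecMulVec v u
  val_inv := by
    have : Matrix.vecMulVec v u * Matrix.vecMulVec v u = 0 := by
      rw [Matrix.vecMulVec_mul_vecMulVec, h, zero_smul, Matrix.vecMulVec_zero]
    rw [add_mul, mul_sub, mul_sub, this]; simp
  inv_val := by
    have : Matrix.vecMulVec v u * Matrix.vecMulVec v u = 0 := by
      rw [Matrix.vecMulVec_mul_vecMulVec, h, zero_smul, Matrix.vecMulVec_zero]
    rw [sub_mul, mul_add, mul_add, this]; simp

lemma tvec_apply (v u : Fin n → F) (h : u ⬝ᵥ v = 0) (i j) :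
    (tvec v u h).1 i j = (1 : Matrix (Fin n) (Fin n) F) i j + v i * u j := rfl

lemma tvec_mul_apply (v u : Fin n → F) (h : u ⬝ᵥ v = 0) (g : GL (Fin n) F) (i j) :
    (tvec v u h * g).1 i j = g.1 i j + v i * ∑ k, u k * g.1 k j := by
  rw [Units.val_mul, Matrix.mul_apply]
  simp only [tvec_apply, add_mul, Finset.sum_add_distrib, Finset.mul_sum, mul_assoc]
  congr 1
  rw [← Matrix.mul_apply, one_mul]

lemma mul_tvec_apply (v u : Fin n → F) (h : u ⬝ᵥ v = 0) (g : GL (Fin n) F) (i j) :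
    (g * tvec v u h).1 i j = g.1 i j + (∑ k, g.1 i k * v k) * u j := by
  rw [Units.val_mul, Matrix.mul_apply]
  simp only [tvec_apply, mul_add, Finset.sum_add_distrib, Finset.sum_mul, mul_assoc]
  congr 1
  rw [← Matrix.mul_apply, mul_one]

lemma bruhat_aux {c : Fin n → L} {d : Fin n → L'} (hc : Function.Injective c)
    (hd : Function.Injective d) (g : GL (Fin n) F) (k : ℕ) (hk : k ≤ n) :
    ∃ p ∈ Pc F c, ∃ q ∈ Pc F d, ∃ S : Finset (Fin n), S.card = k ∧
      (∀ s ∈ S, ∀ j ∉ S, d s < d j) ∧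
      ∀ s ∈ S, ∃ i, (p * g * q).1 i s ≠ 0 ∧ (∀ i', i' ≠ i → (p * g * q).1 i' s = 0) ∧
        (∀ s', s' ≠ s → (p * g * q).1 i s' = 0) := by
  induction k with
  | zero => exact ⟨1, one_mem _, 1, one_mem _, ∅, rfl, by simp, by simp⟩
  | succ k ih =>
    obtain ⟨p, hp, q, hq, S, hS, hS1, hS2⟩ := ih (by omega)
    have hne : (Sᶜ).Nonempty := by
      rw [← Finset.card_pos, Finset.card_compl, Fintype.card_fin]; omega
    obtain ⟨j, hj, hjmin⟩ := Finset.exists_min_image Sᶜ d hne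
    rw [Finset.mem_compl] at hj
    set X := p * g * q with hX
    -- pivot
    have hcol : (Finset.univ.filter fun i => X.1 i j ≠ 0).Nonempty := by
      by_contra hcon
      rw [Finset.not_nonempty_iff_eq_empty, Finset.filter_eq_empty_iff] at hcon
      have h0 : ∀ i, X.1 i j = 0 := by simpa using hcon
      have : (X⁻¹ * X).1 j j = 1 := by simp
      rw [Units.val_mul, Matrix.mul_apply] at this
      simp [h0] at this
    obtain ⟨i, hi, himax⟩ := Finset.exists_max_image _ c hcol
    simp only [Finset.mem_filter, Finset.mem_univ, true_and] at hi himax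
    have hrow : ∀ s ∈ S, X.1 i s = 0 := by
      intro s hs
      obtain ⟨i₀, h1, h2, h3⟩ := hS2 s hs
      apply h2
      rintro rfl
      exact hi (h3 j (by rintro rfl; exact hj hs))
    let v : Fin n → F := fun i' => if i' = i then 0 else - X.1 i' j / X.1 i j
    let u : Fin n → F := fun j' => if j' = j then 0 else - X.1 i j' / X.1 i j
    have hv : (Pi.single i 1 : Fin n → F) ⬝ᵥ v = 0 := by simp [v]
    have hu : u ⬝ᵥ (Pi.single j 1 : Fin n → F) = 0 := by simp [u]
    let b := tvec v (Pi.single i 1) hv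
    let b' := tvec (Pi.single j 1) u hu
    have hb : b ∈ Pc F c := by
      rw [mem_Pc]
      intro a a' haa
      have hne : a ≠ a' := by rintro rfl; exact lt_irrefl _ haa
      simp only [b, tvec_apply, Matrix.one_apply_ne hne, zero_add]
      by_cases ha' : a' = i
      · subst ha'
        simp only [v, if_neg hne]
        have : X.1 a j = 0 := by
          by_contra h
          exact absurd (himax a h) (not_le.2 haa)
        simp [this]
      · simp [ha']
    have hb' : b' ∈ Pc F d := by
      rw [mem_Pc]
      intro a a' haa
      have hne : a ≠ a' := by rintro rfl; exact lt_irrefl _ haa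
      simp only [b', tvec_apply, Matrix.one_apply_ne hne, zero_add]
      by_cases ha : a = j
      · subst ha
        simp only [u, if_neg (Ne.symm hne)]
        have : a' ∈ S := by
          by_contra h
          exact absurd (hjmin a' (by simpa using h)) (not_le.2 haa)
        simp [hrow a' this]
      · simp [ha]
    have hY : ∀ a a', (b * X * b').1 a a' =
        (X.1 a a' + v a * X.1 i a') + (X.1 a j + v a * X.1 i j) * u a' := by
      intro a a'
      simp only [b', mul_tvec_apply, b, tvec_mul_apply]
      simp [Pi.single_apply]
    have hcj : ∀ a, a ≠ i → X.1 a j + v a * X.1 i j = 0 := by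
      intro a ha
      simp only [v, if_neg ha]
      field_simp; ring
    have hYS : ∀ s ∈ S, ∀ a, (b * X * b').1 a s = X.1 a s := by
      intro s hs a
      have hsj : s ≠ j := by rintro rfl; exact hj hs
      rw [hY]
      simp [hrow s hs, u]
    refine ⟨b * p, mul_mem hb hp, q * b', mul_mem hq hb', insert j S, ?_, ?_, ?_⟩
    · rw [Finset.card_insert_of_notMem hj, hS]
    · intro s hs a ha
      rw [Finset.mem_insert, not_or] at ha
      rcases Finset.mem_insert.1 hs with rfl | hs
      · exact lt_of_le_of_ne (hjmin a (by simpa using ha.2)) (fun h => ha.1 (hd h.symm))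
      · exact hS1 s hs a ha.2
    · have hassoc : b * p * g * (q * b') = b * X * b' := by simp [hX, mul_assoc]
      rw [hassoc]
      intro s hs
      rcases Finset.mem_insert.1 hs with rfl | hs'
      · refine ⟨i, ?_, ?_, ?_⟩
        · rw [hY]; simpa [v, u] using hi
        · intro a ha
          rw [hY, hcj a ha]; simp
        · intro a ha
          rw [hY]
          simp only [v, u, if_neg ha, if_true]
          field_simp; ring
      · obtain ⟨i₀, h1, h2, h3⟩ := hS2 s hs'
        have hsj : s ≠ j := by rintro rfl; exact hj hs'
        have hi0 : i₀ ≠ i := by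
          rintro rfl; exact hi (h3 j (Ne.symm hsj))
        have hx0 : X.1 i₀ j = 0 := h3 j (Ne.symm hsj)
        have hv0 : v i₀ = 0 := by simp [v, hx0]
        refine ⟨i₀, ?_, ?_, ?_⟩
        · rw [hYS s hs']; exact h1
        · intro a ha; rw [hYS s hs']; exact h2 a ha
        · intro a ha
          rw [hY, hv0, hx0, h3 a ha]; simp

lemma bruhat_inj {c : Fin n → L} {d : Fin n → L'} (hc : Function.Injective c)
    (hd : Function.Injective d) (g : GL (Fin n) F) :
    ∃ x, ∃ p ∈ Pc F c, ∃ q ∈ Pc F d, io F n x = p * g * q := by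
  obtain ⟨p, hp, q, hq, S, hS, _, h⟩ := bruhat_aux hc hd g n le_rfl
  have hS' : S = Finset.univ := by
    apply Finset.eq_univ_of_card; simpa using hS
  subst hS'
  obtain ⟨x, hx⟩ := io_surj (fun s => h s (Finset.mem_univ s))
  exact ⟨x, p, hp, q, hq, hx⟩

lemma Pc_refine (c : Fin n → L) {g : GL (Fin n) F}
    (h : g ∈ Pc F (fun i => toLex (c i, i))) : g ∈ Pc F c := by
  rw [mem_Pc] at *
  intro i j hij
  apply h
  rw [Prod.Lex.toLex_lt_toLex]
  exact Or.inl hij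

lemma bruhat [Fintype F] (c : Fin n → L) (d : Fin n → L') (g : GL (Fin n) F) :
    ∃ x, io F n x ∈ dcl (Pc F c) (Pc F d) g := by
  have hinj : ∀ {L : Type} (c : Fin n → L), Function.Injective (fun i => toLex (c i, i)) := by
    intro L c i j h
    have := congrArg (fun z => (ofLex z).2) h
    exact this
  obtain ⟨x, p, hp, q, hq, h⟩ := bruhat_inj (hinj c) (hinj d) g
  refine ⟨x, ?_⟩
  rw [mem_dcl]
  exact ⟨⟨p, Pc_refine c hp⟩, ⟨q, Pc_refine d hq⟩, h⟩

lemma perm_le_eq (c : Fin n → L) (τ : Equiv.Perm (Fin n)) (h : ∀ i, c (τ i) ≤ c i) (i) :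
    c (τ i) = c i := by
  have h1 : ∀ (m : ℕ) (i), c ((τ ^ m) i) ≤ c i := by
    intro m
    induction m with
    | zero => intro i; simp
    | succ m ih => intro i; rw [pow_succ']; exact (h _).trans (ih i)
  refine le_antisymm (h i) ?_
  have h2 := h1 (orderOf τ - 1) (τ i)
  have h3 : (τ ^ (orderOf τ - 1)) (τ i) = i := by
    rw [← Equiv.Perm.mul_apply, ← pow_succ, Nat.sub_add_cancel (orderOf_pos τ), pow_orderOf_eq_one]
    rfl
  rwa [h3] at h2

lemma dcl_iff [Fintype F] (c : Fin n → L) (d : Fin n → L') (x y : Mon Fˣ n) :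
    io F n y ∈ dcl (Pc F c) (Pc F d) (io F n x) ↔ y ∈ dcl (Mc Fˣ c) (Mc Fˣ d) x := by
  constructor
  · intro h
    rw [mem_dcl] at h
    obtain ⟨p, q, e⟩ := h
    rw [mem_dcl_Mc]
    set X := (p : GL (Fin n) F) * io F n x with hX
    have hdet : X.1.det ≠ 0 := ((Matrix.isUnit_iff_isUnit_det _).1 X.isUnit).ne_zero
    rw [Matrix.det_apply] at hdet
    obtain ⟨σ, _, hσ⟩ := Finset.exists_ne_zero_of_sum_ne_zero hdet
    have hσ' : ∀ j, X.1 (σ j) j ≠ 0 := by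
      intro j hj
      apply hσ
      have h0 : ∏ i, X.1 (σ i) i = 0 := Finset.prod_eq_zero (Finset.mem_univ j) hj
      exact (congrArg _ h0).trans (smul_zero _)
    have hX2 : X = io F n y * (q⁻¹ : Pc F d).1 := by rw [e]; simp
    have h1 : ∀ i, c ((σ * x.w⁻¹) i) ≤ c i := by
      intro i
      by_contra hlt
      rw [not_le] at hlt
      apply hσ' (x.w⁻¹ i)
      rw [hX, Units.val_mul, Matrix.mul_apply]
      apply Finset.sum_eq_zero
      intro k _
      rw [io_apply]
      split_ifs with hk
      · rw [mem_Pc.1 p.2, zero_mul]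
        rw [hk]; simpa using hlt
      · simp
    have h2 : ∀ j, d ((y.w⁻¹ * σ) j) ≤ d j := by
      intro j
      by_contra hlt
      rw [not_le] at hlt
      apply hσ' j
      rw [hX2, Units.val_mul, Matrix.mul_apply]
      apply Finset.sum_eq_zero
      intro k _
      rw [io_apply]
      split_ifs with hk
      · rw [mem_Pc.1 (q⁻¹).2, mul_zero]
        have : k = (y.w⁻¹ * σ) j := by simp [hk]
        rw [this]; exact hlt
      · simp
    have h1' := perm_le_eq c _ h1
    have h2' := perm_le_eq d _ h2
    refine ⟨σ * x.w⁻¹, (y.w⁻¹ * σ)⁻¹, h1', ?_, by simp⟩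
    intro i
    have := h2' ((y.w⁻¹ * σ)⁻¹ i)
    rw [← this, ← Equiv.Perm.mul_apply, mul_inv_cancel]; rfl
  · rw [mem_dcl, mem_dcl]
    rintro ⟨p, q, rfl⟩
    exact ⟨⟨_, io_Mc p.2⟩, ⟨_, io_Mc q.2⟩, by simp⟩

lemma tsb_diag (t : Fin n → Fˣ) (c : Fin n → L) (k : L) (h) :
    dblk c k (⟨io F n ⟨t, 1⟩, h⟩ : Pc F c) = ∏ i, if c i = k then t i else 1 := by
  ext
  rw [dblk_val]
  have : (io F n ⟨t, 1⟩).1.toSquareBlock c k = Matrix.diagonal fun i => (t i.1 : F) := by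
    ext i j
    rw [Matrix.toSquareBlock_def, Matrix.of_apply, io_apply]
    by_cases h : i = j
    · subst h; simp
    · rw [Matrix.diagonal_apply_ne _ h, if_neg]
      intro h'; exact h (Subtype.ext h')
  simp only [this, Matrix.det_diagonal]
  rw [← Finset.prod_filter, Units.coe_prod]
  exact (Finset.prod_subtype _ (by simp) (fun i => (t i : F))).symm

lemma chi_diag [Fintype L] (t : Fin n → Fˣ) (c : Fin n → L) (α : L → (Fˣ →* ℂˣ)) (h) :
    chi c α (⟨io F n ⟨t, 1⟩, h⟩ : Pc F c) = ∏ i, α (c i) (t i) := by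
  rw [chi_apply]
  simp only [tsb_diag, map_prod]
  rw [Finset.prod_comm]
  refine Finset.prod_congr rfl fun i _ => ?_
  rw [Finset.prod_eq_single (c i)]
  · simp
  · intro b _ hb; simp [Ne.symm hb]
  · simp

lemma chi_coarse [Fintype L] {R : Type} [LinearOrder R] [Fintype R] {r : Fin n → R} (f : R → L)
    {c : Fin n → L} (hc : c = f ∘ r) (α : L → (Fˣ →* ℂˣ)) (p : GL (Fin n) F)
    (h1 : p ∈ Pc F c) (h2 : p ∈ Pc F r) :
    chi c α ⟨p, h1⟩ = chi r (α ∘ f) ⟨p, h2⟩ := by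
  subst hc
  rw [chi_apply, chi_apply]
  have : ∀ k, dblk (f ∘ r) k ⟨p, h1⟩ = ∏ ρ, if f ρ = k then dblk r ρ ⟨p, h2⟩ else 1 := by
    intro k
    ext
    rw [dblk_val, Units.coe_prod]
    simp only
    refine (det_coarse h2 f k).trans ?_
    refine Finset.prod_congr rfl fun ρ _ => ?_
    split_ifs
    · rfl
    · rfl
  simp only [this, map_prod]
  rw [Finset.prod_comm]
  refine Finset.prod_congr rfl fun i _ => ?_
  rw [Finset.prod_eq_single (f i)]
  · simp
  · intro b _ hb; simp [Ne.symm hb]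
  · simp

lemma adm_iff [Fintype L] [Fintype L'] [Fintype F] (c : Fin n → L) (d : Fin n → L')
    (α : L → (Fˣ →* ℂˣ)) (β : L' → (Fˣ →* ℂˣ)) (x : Mon Fˣ n) :
    adm (Pc F c) (Pc F d) (chi c α) (chi d β) (io F n x) ↔
      adm (Mc Fˣ c) (Mc Fˣ d) (th c α 1) (th d β 1) x := by
  rw [adm_Mc_one]
  constructor
  · intro h i
    ext1 a
    have hT : ∀ {L : Type} [LinearOrder L] (c : Fin n → L) (t : Fin n → Fˣ),
      io F n ⟨t, 1⟩ ∈ Pc F c := fun c t => io_Mc (fun _ => rfl)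
    have := h ⟨_, hT c (Pi.mulSingle (x.w i) a)⟩ ⟨_, hT d (Pi.mulSingle i a)⟩ (by
      simp only [← map_mul]
      congr 1
      ext j
      · have h1s : (Equiv.symm (1 : Equiv.Perm (Fin n))) j = j := rfl
        simp only [Mon.mul_t, h1s]
        rw [mul_comm]
        congr 1
        by_cases hj : j = x.w i
        · subst hj; simp
        · rw [Pi.mulSingle_eq_of_ne hj, Pi.mulSingle_eq_of_ne]
          intro h; exact hj (by rw [← h]; simp)
      · simp)
    rw [chi_diag, chi_diag, Finset.prod_eq_single (x.w i), Finset.prod_eq_single i] at this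
    · simpa using this
    · intro b _ hb; rw [Pi.mulSingle_eq_of_ne hb, map_one]
    · simp
    · intro b _ hb; rw [Pi.mulSingle_eq_of_ne hb, map_one]
    · simp
  · intro h p q e
    have e1 : ∀ i j, p.1.1 (x.w i) (x.w j) * x.t (x.w j) = x.t (x.w i) * q.1.1 i j := by
      intro i j
      have := congrArg (fun g : GL (Fin n) F => g.1 (x.w i) j) e
      simp only [Units.val_mul, Matrix.mul_apply, io_apply] at this
      rw [Finset.sum_eq_single (x.w j), Finset.sum_eq_single i] at this
      · simpa using this
      · intro b _ hb; rw [if_neg, zero_mul]; intro h; exact hb (x.w.injective h).symm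
      · simp
      · intro b _ hb; rw [if_neg hb, mul_zero]
      · simp
    -- move everything to `p`
    set d' : Fin n → L' := fun i => d (x.w.symm i) with hd'
    have hp' : p.1 ∈ Pc F d' := by
      rw [mem_Pc]
      intro i j hij
      have := e1 (x.w.symm i) (x.w.symm j)
      rw [mem_Pc.1 q.2 _ _ hij] at this
      simpa using this
    have hq : chi d β q = chi d' β ⟨p.1, hp'⟩ := by
      rw [chi_apply, chi_apply]
      refine Finset.prod_congr rfl fun k _ => ?_
      congr 1
      ext
      rw [dblk_val, dblk_val]
      let ev : {a // d a = k} ≃ {a // d' a = k} :=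
        { toFun := fun a => ⟨x.w a.1, by simp [hd', a.2]⟩
          invFun := fun a => ⟨x.w.symm a.1, a.2⟩
          left_inv := fun a => by simp
          right_inv := fun a => by simp }
      let D : Matrix {a // d a = k} {a // d a = k} F := Matrix.diagonal fun a => (x.t (x.w a.1) : F)
      have hD : D.det ≠ 0 := by
        simp only [D, Matrix.det_diagonal]
        exact Finset.prod_ne_zero_iff.2 fun a _ => Units.ne_zero _
      have e2 : (p.1.1.toSquareBlock d' k).submatrix ev ev * D = D * q.1.1.toSquareBlock d k := by
        ext i j
        simp only [D, Matrix.mul_diagonal, Matrix.diagonal_mul]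
        exact e1 i.1 j.1
      have e3 := congrArg Matrix.det e2
      rw [Matrix.det_mul, Matrix.det_mul, Matrix.det_submatrix_equiv_self, mul_comm] at e3
      exact (mul_left_cancel₀ hD e3).symm
    rw [hq]
    let r : Fin n → L ×ₗ L' := fun i => toLex (c i, d' i)
    have hr : p.1 ∈ Pc F r := by
      rw [mem_Pc]
      intro i j hij
      simp only [r, Prod.Lex.toLex_lt_toLex] at hij
      rcases hij with h | h
      · exact mem_Pc.1 p.2 _ _ h
      · exact mem_Pc.1 hp' _ _ h.2
    have h1 : chi c α p = _ := chi_coarse (r := r) (fun z => (ofLex z).1) rfl α p.1 p.2 hr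
    have h2 : chi d' β ⟨p.1, hp'⟩ = _ :=
      chi_coarse (r := r) (fun z => (ofLex z).2) rfl β p.1 hp' hr
    rw [h1, h2]
    rw [chi_apply, chi_apply]
    refine Finset.prod_congr rfl fun ρ _ => ?_
    by_cases hρ : ∃ i, r i = ρ
    · obtain ⟨i, rfl⟩ := hρ
      have := h (x.w.symm i)
      simp only [Equiv.apply_symm_apply] at this
      simp only [Function.comp_apply, r, ofLex_toLex]
      rw [this]
    · have : dblk r ρ ⟨p.1, hr⟩ = 1 := by
        ext
        rw [dblk_val]
        have : IsEmpty {a // r a = ρ} := ⟨fun a => hρ ⟨a.1, a.2⟩⟩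
        exact Matrix.det_isEmpty
      rw [this, map_one, map_one]

/-- the key comparison: Gram matrices agree -/
theorem ker_G_M [Fintype L] [Fintype L'] [Fintype F] (c : Fin n → L) (d : Fin n → L')
    (α : L → (Fˣ →* ℂˣ)) (β : L' → (Fˣ →* ℂˣ)) :
    ker (Pc F c) (Pc F d) (chi c α) (chi d β) =
      ker (Mc Fˣ c) (Mc Fˣ d) (th c α 1) (th d β 1) :=
  ker_compare (io F n) _ _ _ _ _ _ _ _ (bruhat c d) (dcl_iff c d) (adm_iff c d α β)

end Bruhat

section Theta

variable {K : Type} [CommGroup K] [Fintype K]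

instance instFiniteDual : Finite (K →* ℂˣ) := by
  have : NeZero (Monoid.exponent K) := ⟨Monoid.exponent_ne_zero_of_finite⟩
  obtain ⟨e⟩ := CommGroup.monoidHom_mulEquiv_of_hasEnoughRootsOfUnity K ℂ
  exact Finite.of_equiv _ e.symm.toEquiv

instance instFintypeDual : Fintype (K →* ℂˣ) := Fintype.ofFinite _

lemma card_dual : Nat.card (K →* ℂˣ) = Nat.card K := by
  have : NeZero (Monoid.exponent K) := ⟨Monoid.exponent_ne_zero_of_finite⟩
  exact CommGroup.card_monoidHom_of_hasEnoughRootsOfUnity K ℂ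

lemma sum_dual (t : K) : ∑ a : K →* ℂˣ, ((a t : ℂˣ) : ℂ) = if t = 1 then (Nat.card K : ℂ) else 0 := by
  split_ifs with h
  · subst h
    simp only [map_one, Units.val_one, Finset.sum_const, Finset.card_univ, nsmul_eq_mul, mul_one]
    rw [← Nat.card_eq_fintype_card, card_dual]
  · have : NeZero (Monoid.exponent K) := ⟨Monoid.exponent_ne_zero_of_finite⟩
    obtain ⟨b, hb⟩ := CommGroup.exists_apply_ne_one_of_hasEnoughRootsOfUnity K ℂ h
    set S := ∑ a : K →* ℂˣ, ((a t : ℂˣ) : ℂ) with hS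
    have h2 : ((b t : ℂˣ) : ℂ) * S = S := by
      rw [hS, Finset.mul_sum]
      conv_rhs => rw [← Equiv.sum_comp (Equiv.mulLeft b)]
      simp
    have h3 : (((b t : ℂˣ) : ℂ) - 1) * S = 0 := by rw [sub_mul, h2]; ring
    rcases mul_eq_zero.1 h3 with h4 | h4
    · exfalso
      apply hb
      exact Units.ext (by simpa using sub_eq_zero.1 h4)
    · exact h4

lemma sum_dual_pi {n : ℕ} (t : Fin n → K) : ∑ θ : Fin n → (K →* ℂˣ),
    ((∏ i, θ i (t i) : ℂˣ) : ℂ) = if t = 1 then (Nat.card K : ℂ) ^ n else 0 := by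
  simp only [Units.coe_prod]
  rw [← Fintype.prod_sum (fun i (a : K →* ℂˣ) => ((a (t i) : ℂˣ) : ℂ))]
  simp only [sum_dual]
  split_ifs with h
  · subst h; simp
  · obtain ⟨i, hi⟩ := Function.ne_iff.1 h
    exact Finset.prod_eq_zero (Finset.mem_univ i) (by simpa using hi)

lemma sum_theta {n : ℕ} {G : Type} [Group G] [Fintype G] (P : Subgroup G)
    (δ : P →* (Fin n → K)) (hδ : Function.Surjective δ)
    (l : (Fin n → (K →* ℂˣ)) → (P →* ℂˣ)) (hl : ∀ θ p, l θ p = ∏ i, θ i (δ p i)) (f : G → ℂ) :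
    ∑ θ, mult P (l θ) f = mult (δ.ker.map P.subtype) 1 f := by
  unfold mult
  rw [← Finset.mul_sum, Finset.sum_comm]
  simp only [← Finset.sum_mul, hl]
  simp only [sum_dual_pi]
  let e := (δ.ker.equivMapOfInjective P.subtype P.subtype_injective)
  rw [← Equiv.sum_comp e.toEquiv, ← Nat.card_congr e.toEquiv]
  have hc : Nat.card P = Nat.card K ^ n * Nat.card δ.ker := by
    rw [← Subgroup.card_eq_card_quotient_mul_card_subgroup δ.ker |>.symm]
    rw [Nat.card_congr (QuotientGroup.quotientKerEquivOfSurjective δ hδ).toEquiv]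
    simp [Nat.card_eq_fintype_card]
  have h1 : ∑ p : P, (if δ p = 1 then (Nat.card K : ℂ) ^ n else 0) * f (p : G)⁻¹ =
      (Nat.card K : ℂ) ^ n * ∑ p : δ.ker, f ((p : P) : G)⁻¹ := by
    simp only [ite_mul, zero_mul]
    rw [← Finset.sum_filter, Finset.mul_sum]
    exact Finset.sum_subtype _ (by simp [MonoidHom.mem_ker]) (fun p : P => (Nat.card K : ℂ) ^ n * f (p : G)⁻¹)
  rw [h1, hc]
  push_cast
  have : (Nat.card K : ℂ) ≠ 0 := card_ne K
  have : (Nat.card δ.ker : ℂ) ≠ 0 := card_ne _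
  field_simp
  simp [e]

/-- on the monomial side, the sum is the degree -/
lemma sum_theta_M {n : ℕ} (f : Mon K n → ℂ) :
    ∑ θ : Fin n → (K →* ℂˣ), mult (Mc K (id : Fin n → Fin n)) (th id θ 1) f = f 1 := by
  let δ : Mc K (id : Fin n → Fin n) →* (Fin n → K) :=
    { toFun := fun m => m.1.t
      map_one' := rfl
      map_mul' := by
        intro a b
        ext i
        have := Mc_symm a.2 i
        simp only [id] at this
        simp [this] }
  rw [sum_theta _ δ _ _ (fun θ p => by rw [th_apply]; simp; rfl)]
  · have : δ.ker.map (Mc K (id : Fin n → Fin n)).subtype = ⊥ := by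
      rw [Subgroup.map_eq_bot_iff_of_injective _ (Subgroup.subtype_injective _), eq_bot_iff]
      intro m hm
      rw [Subgroup.mem_bot]
      rw [MonoidHom.mem_ker] at hm
      ext i
      · exact congrFun hm i
      · have := m.2 i
        simpa using congrArg Fin.val this
    rw [this]
    unfold mult
    have hd : ((default : (⊥ : Subgroup (Mon K n))) : Mon K n) = 1 :=
      Subgroup.mem_bot.1 (default : (⊥ : Subgroup (Mon K n))).2
    simp [hd]
  · intro t
    exact ⟨⟨⟨t, 1⟩, fun _ => rfl⟩, rfl⟩

variable {F : Type} [Field F] {n : ℕ}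

/-- triangular matrices with zero columns before `m` and ones on the diagonal outside `S` -/
def UT [Fintype F] (m : ℕ) (S : Set (Fin n)) : Subgroup (GL (Fin n) F) :=
  let T : Submonoid (GL (Fin n) F) :=
    { carrier := {g | (∀ i j : Fin n, j < i → g.1 i j = 0) ∧
        (∀ i j : Fin n, i < j → j.1 < m → g.1 i j = 0) ∧ ∀ i ∉ S, g.1 i i = 1}
      one_mem' := by
        refine ⟨fun i j h => ?_, fun i j h _ => ?_, fun i _ => ?_⟩
        · simp [h.ne']
        · simp [h.ne]
        · simp
      mul_mem' := by
        rintro g h ⟨g1, g2, g3⟩ ⟨h1, h2, h3⟩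
        refine ⟨fun i j hij => ?_, fun i j hij hj => ?_, fun i hi => ?_⟩
        · rw [Units.val_mul, Matrix.mul_apply]
          refine Finset.sum_eq_zero fun l _ => ?_
          rcases lt_or_ge l i with hl | hl
          · rw [g1 _ _ hl, zero_mul]
          · rw [h1 _ _ (lt_of_lt_of_le hij hl), mul_zero]
        · rw [Units.val_mul, Matrix.mul_apply]
          refine Finset.sum_eq_zero fun l _ => ?_
          rcases lt_trichotomy l j with hl | hl | hl
          · rw [h2 _ _ hl hj, mul_zero]
          · subst hl; rw [g2 _ _ hij hj, zero_mul]
          · rw [h1 _ _ hl, mul_zero]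
        · rw [Units.val_mul, Matrix.mul_apply, Finset.sum_eq_single i]
          · rw [g3 i hi, h3 i hi, one_mul]
          · intro l _ hl
            rcases lt_or_gt_of_ne hl with hl | hl
            · rw [g1 _ _ hl, zero_mul]
            · rw [h1 _ _ hl, mul_zero]
          · simp }
  { T with
    inv_mem' := by
      intro g hg
      have : g⁻¹ = g ^ (orderOf g - 1) := by
        rw [inv_eq_iff_mul_eq_one, ← pow_succ', Nat.sub_add_cancel (orderOf_pos g),
          pow_orderOf_eq_one]
      rw [this]
      exact T.pow_mem hg _ }

variable [Fintype F]

lemma mem_UT {m : ℕ} {S : Set (Fin n)} {g : GL (Fin n) F} : g ∈ UT m S ↔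
    (∀ i j : Fin n, j < i → g.1 i j = 0) ∧
        (∀ i j : Fin n, i < j → j.1 < m → g.1 i j = 0) ∧ ∀ i ∉ S, g.1 i i = 1 := Iff.rfl

lemma sum_theta_G (f : GL (Fin n) F → ℂ) :
    ∑ θ : Fin n → (Fˣ →* ℂˣ), mult (Pc F (id : Fin n → Fin n)) (chi id θ) f =
      mult (UT 0 ∅) 1 f := by
  let δ : Pc F (id : Fin n → Fin n) →* (Fin n → Fˣ) := MonoidHom.pi fun k => dblk id k
  rw [sum_theta _ δ _ _ (fun θ p => by rw [chi_apply]; rfl)]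
  · have : δ.ker.map (Pc F (id : Fin n → Fin n)).subtype = UT 0 ∅ := by
      ext g
      rw [Subgroup.mem_map, mem_UT]
      have hd : ∀ p : Pc F (id : Fin n → Fin n), p ∈ δ.ker ↔ ∀ i, p.1.1 i i = 1 := by
        intro p
        rw [MonoidHom.mem_ker]
        constructor
        · intro h i
          have := congrArg Units.val (congrFun h i)
          exact (Matrix.det_toSquareBlock_id p.1.1 i).symm.trans this
        · intro h
          ext i
          exact (Matrix.det_toSquareBlock_id p.1.1 i).trans (h i)
      constructor
      · rintro ⟨p, hp, rfl⟩
        refine ⟨fun i j h => mem_Pc.1 p.2 i j h, by simp, fun i _ => (hd p).1 hp i⟩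
      · rintro ⟨h1, _, h3⟩
        have hg : g ∈ Pc F (id : Fin n → Fin n) := by
          rw [mem_Pc]; exact h1
        exact ⟨⟨g, hg⟩, (hd _).2 fun i => h3 i (by simp), rfl⟩
    rw [this]
  · intro t
    refine ⟨⟨io F n ⟨t, 1⟩, io_Mc (fun _ => rfl)⟩, ?_⟩
    funext k
    have := tsb_diag t (id : Fin n → Fin n) k (io_Mc (fun _ => rfl))
    simpa [δ] using this

/-- abstract averaging lemma -/
lemma avg_eq {G : Type} [Group G] [Fintype G] (H H' : Subgroup G) (hH : H ≤ H') (a : G)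
    (h : ∀ x ∈ H', ∃ s : G, (∀ u ∈ H, s * u * s⁻¹ ∈ H) ∧ (s * a * s⁻¹) * (x * a)⁻¹ ∈ H)
    {f : G → ℂ} (hf : IsClass f) :
    (Nat.card H' : ℂ)⁻¹ * ∑ u : H', f (u * a) = (Nat.card H : ℂ)⁻¹ * ∑ u : H, f (u * a) := by
  have h1 : ∀ x : H', ∑ u : H, f (u * (x * a)) = ∑ u : H, f (u * a) := by
    intro x
    obtain ⟨s, hs1, hs2⟩ := h x x.2
    set h₀ : H := ⟨_, hs2⟩ with hh₀
    let φ : H → H := fun u => ⟨s * u * s⁻¹, hs1 u u.2⟩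
    have hφ : Function.Injective φ := by
      intro u v e
      have := congrArg Subtype.val e
      simpa [φ] using this
    let e : H ≃ H := (Equiv.ofBijective φ (Finite.injective_iff_bijective.1 hφ)).trans
      (Equiv.mulRight h₀)
    rw [← Equiv.sum_comp e]
    refine Finset.sum_congr rfl fun u _ => ?_
    rw [← hf (u * a) s]
    congr 1
    have : ((e u : H) : G) = s * u * s⁻¹ * ((s * a * s⁻¹) * (x * a)⁻¹) := rfl
    rw [this]; group
  have h2 : ∑ x : H', ∑ u : H, f (u * (x * a)) = Nat.card H * ∑ x : H', f (x * a) := by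
    rw [Finset.sum_comm]
    have : ∀ u : H, ∑ x : H', f (u * (x * a)) = ∑ x : H', f (x * a) := by
      intro u
      rw [← Equiv.sum_comp (Equiv.mulLeft (⟨u, hH u.2⟩ : H')) (fun x : H' => f (x * a))]
      simp [mul_assoc]
    rw [Finset.sum_congr rfl fun u _ => this u]
    simp [Nat.card_eq_fintype_card]
  rw [Finset.sum_congr rfl fun x _ => h1 x] at h2
  simp only [Finset.sum_const, Finset.card_univ, nsmul_eq_mul] at h2
  rw [← Nat.card_eq_fintype_card] at h2
  have := card_ne H
  have := card_ne H'
  field_simp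
  rw [mul_comm, ← h2]

/-- the one-parameter torus -/
def ak (k : Fin n) (z : Fˣ) : GL (Fin n) F := io F n ⟨Pi.mulSingle k z, 1⟩

lemma mul_ak (k : Fin n) (z : Fˣ) (g : GL (Fin n) F) (i j) :
    (g * ak k z).1 i j = g.1 i j * (if j = k then (z : F) else 1) := by
  rw [Units.val_mul, Matrix.mul_apply, Finset.sum_eq_single j]
  · rw [ak, io_apply]
    by_cases h : j = k
    · subst h; simp
    · simp [h]
  · intro b _ hb
    rw [ak, io_apply, if_neg (by simpa using hb), mul_zero]
  · simp

lemma ak_mul (k : Fin n) (z : Fˣ) (g : GL (Fin n) F) (i j) :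
    (ak k z * g).1 i j = (if i = k then (z : F) else 1) * g.1 i j := by
  rw [Units.val_mul, Matrix.mul_apply, Finset.sum_eq_single i]
  · rw [ak, io_apply]
    by_cases h : i = k
    · subst h; simp
    · simp [h]
  · intro b _ hb
    rw [ak, io_apply, if_neg (by simpa using Ne.symm hb), zero_mul]
  · simp

lemma ak_one (k : Fin n) : ak k (1 : Fˣ) = (1 : GL (Fin n) F) := by
  rw [ak, Pi.mulSingle_one]
  exact map_one (io F n)

lemma ak_inv (k : Fin n) (z : Fˣ) : (ak k z)⁻¹ = (ak k z⁻¹ : GL (Fin n) F) := by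
  rw [inv_eq_iff_mul_eq_one, ak, ak, ← map_mul]
  convert map_one (io F n)
  ext i
  · by_cases h : i = k
    · subst h
      have : (Equiv.symm (1 : Equiv.Perm (Fin n))) i = i := rfl
      simp [this]
    · have : (Equiv.symm (1 : Equiv.Perm (Fin n))) i = i := rfl
      simp [this, h]
  · simp

lemma avg_UT (k : Fin n) (z : Fˣ) (hz : z ≠ 1) {f : GL (Fin n) F → ℂ} (hf : IsClass f) :
    (Nat.card (UT k.1 ∅ : Subgroup (GL (Fin n) F)) : ℂ)⁻¹ *
        ∑ u : (UT k.1 ∅ : Subgroup (GL (Fin n) F)), f (u * ak k z) =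
      (Nat.card (UT (k.1 + 1) ∅ : Subgroup (GL (Fin n) F)) : ℂ)⁻¹ *
        ∑ u : (UT (k.1 + 1) ∅ : Subgroup (GL (Fin n) F)), f (u * ak k z) := by
  apply avg_eq _ _ _ _ _ hf
  · rintro g ⟨h1, h2, h3⟩
    exact ⟨h1, fun i j hij hj => h2 i j hij (by omega), h3⟩
  rintro x ⟨x1, x2, x3⟩
  have hz' : (1 : F) - (z : F)⁻¹ ≠ 0 := by
    intro h
    apply hz
    ext
    rw [sub_eq_zero] at h
    rw [Units.val_one, ← inv_inv (z : F), ← h, inv_one]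
  let v : Fin n → F := fun i => if i < k then x.1 i k else 0
  let w : Fin n → F := fun i => v i / (1 - (z : F)⁻¹)
  have hvk : v k = 0 := by simp [v]
  have hwk : w k = 0 := by simp [w, hvk]
  have hd : ∀ v : Fin n → F, v k = 0 → (Pi.single k 1 : Fin n → F) ⬝ᵥ v = 0 := by
    intro v hv; simp [hv]
  let e : ∀ v : Fin n → F, v k = 0 → GL (Fin n) F := fun v hv => tvec v (Pi.single k 1) (hd v hv)
  let s := e w hwk
  have hsU : s ∈ (UT 0 ∅ : Subgroup (GL (Fin n) F)) := by
    refine ⟨fun i j hij => ?_, by simp, fun i _ => ?_⟩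
    · simp only [s, e, tvec_apply, Matrix.one_apply_ne hij.ne', zero_add]
      by_cases hj : j = k
      · subst hj; simp [w, v, not_lt.2 hij.le]
      · simp [hj]
    · simp only [s, e, tvec_apply, Matrix.one_apply_eq]
      by_cases hi : i = k
      · subst hi; simp [hwk]
      · simp [hi]
  refine ⟨s, ?_, ?_⟩
  · intro u hu
    have hu0 : u ∈ (UT 0 ∅ : Subgroup (GL (Fin n) F)) := ⟨hu.1, by simp, hu.2.2⟩
    have h0 := mul_mem (mul_mem hsU hu0) (inv_mem hsU)
    refine ⟨h0.1, fun i j hij hj => ?_, h0.2.2⟩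
    have hsi := inv_mem hsU
    have e1 : ∀ l, (s * u).1 i l * (s⁻¹).1 l j = s.1 i l * (s⁻¹).1 l j := by
      intro l
      rcases lt_or_ge j l with hl | hl
      · rw [hsi.1 _ _ hl]; simp
      · congr 1
        rw [Units.val_mul, Matrix.mul_apply, Finset.sum_eq_single l]
        · rw [hu.2.2 l (by simp), mul_one]
        · intro b _ hb
          rcases lt_or_gt_of_ne hb with hb | hb
          · rw [hu.2.1 _ _ hb (by have : l.1 ≤ j.1 := hl; omega), mul_zero]
          · rw [hu.1 _ _ hb, mul_zero]
        · simp
    rw [Units.val_mul, Matrix.mul_apply, Finset.sum_congr rfl fun l _ => e1 l, ← Matrix.mul_apply,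
      ← Units.val_mul, mul_inv_cancel, Units.val_one, Matrix.one_apply_ne hij.ne]
  · have hsa : s * ak k z * s⁻¹ = e v hvk * ak k z := by
      rw [mul_inv_eq_iff_eq_mul, mul_assoc]
      ext i j
      have hsg : ∀ (v : Fin n → F) (hv) (g : GL (Fin n) F) (i j),
          (tvec v (Pi.single k 1) hv * g).1 i j = g.1 i j + v i * g.1 k j := by
        intro v hv g i j
        rw [tvec_mul_apply]
        simp [Pi.single_apply]
      rw [mul_ak, hsg, ak_mul, ak_mul]
      simp only [s, e, tvec_apply]
      by_cases hj : j = k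
      · subst hj
        by_cases hi : i = j
        · subst hi
          simp [hvk, hwk]
        · simp only [hi, if_true, if_false, one_mul, Pi.single_eq_same, Matrix.one_apply_ne hi,
            zero_add, mul_one, Matrix.one_apply_eq, hwk, add_zero]
          have hz0 : (z : F) ≠ 0 := z.ne_zero
          have e3 : v i = w i * (1 - (z : F)⁻¹) := by
            exact (div_mul_cancel₀ _ hz').symm
          rw [e3]; field_simp; ring
      · rw [Pi.single_eq_of_ne hj, if_neg hj, Matrix.one_apply_ne (Ne.symm hj)]
        by_cases hi : i = k
        · subst hi; simp [Matrix.one_apply_ne (Ne.symm hj)]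
        · simp [hi]
    have : s * ak k z * s⁻¹ * (x * ak k z)⁻¹ = e v hvk * x⁻¹ := by rw [hsa]; group
    rw [this, ← inv_inv (e v hvk * x⁻¹)]
    apply inv_mem
    rw [_root_.mul_inv_rev, inv_inv]
    have hev : (e v hvk)⁻¹ = e (-v) (by simp [hvk]) := by
      rw [inv_eq_iff_mul_eq_one]
      ext i j
      simp only [e, tvec_mul_apply, tvec_apply, Units.val_one]
      simp [Pi.single_apply, hvk]
      by_cases hj : j = k
      · subst hj; simp
      · simp [hj, Matrix.one_apply_ne (Ne.symm hj)]
    rw [hev]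
    have hY : ∀ i j, (x * e (-v) (by simp [hvk])).1 i j = x.1 i j - (if j = k then v i else 0) := by
      intro i j
      simp only [e, mul_tvec_apply]
      have : ∑ l, x.1 i l * (-v) l = - v i := by
        rw [Finset.sum_eq_single i]
        · rw [x3 i (by simp)]; simp
        · intro b _ hb
          simp only [Pi.neg_apply, v]
          split_ifs with hbk
          · rcases lt_or_gt_of_ne hb with hb | hb
            · rw [x1 _ _ hb, zero_mul]
            · rw [x2 _ _ hb hbk, zero_mul]
          · simp
        · simp
      rw [this, Pi.single_apply]
      split_ifs <;> ring
    refine ⟨fun i j hij => ?_, fun i j hij hj => ?_, fun i _ => ?_⟩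
    · rw [hY, x1 _ _ hij]
      by_cases hj : j = k
      · subst hj; simp [v, not_lt.2 hij.le]
      · simp [hj]
    · rw [hY]
      by_cases hjk : j = k
      · subst hjk; simp [v, hij]
      · rw [if_neg hjk, x2 _ _ hij, sub_zero]
        have : j.1 ≠ k.1 := fun h => hjk (Fin.ext h)
        omega
    · rw [hY, x3 i (by simp)]
      by_cases hi : i = k
      · subst hi; simp [hvk]
      · simp [hi]

/-- decomposition of the group extended by the one-parameter torus -/
lemma sum_UT (k : Fin n) (m : ℕ) (f : GL (Fin n) F → ℂ) :
    ∑ p : (UT m {k} : Subgroup (GL (Fin n) F)), f p =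
      ∑ z : Fˣ, ∑ u : (UT m ∅ : Subgroup (GL (Fin n) F)), f (u * ak k z) := by
  rw [← Fintype.sum_prod_type' (f := fun z (u : (UT m ∅ : Subgroup (GL (Fin n) F))) =>
    f (u.1 * ak k z))]
  symm
  refine Fintype.sum_bijective (fun r : Fˣ × (UT m ∅ : Subgroup (GL (Fin n) F)) =>
    (⟨r.2.1 * ak k r.1, ?_⟩ : (UT m {k} : Subgroup (GL (Fin n) F)))) ?_ _ _ (fun _ => rfl)
  · obtain ⟨z, u, u1, u2, u3⟩ := r
    refine ⟨fun i j hij => ?_, fun i j hij hj => ?_, fun i hi => ?_⟩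
    · rw [mul_ak, u1 i j hij, zero_mul]
    · rw [mul_ak, u2 i j hij hj, zero_mul]
    · rw [mul_ak, u3 i (by simp), if_neg (by simpa using hi), one_mul]
  constructor
  · rintro ⟨z, u⟩ ⟨z', u'⟩ h
    have h' : u.1 * ak k z = u'.1 * ak k z' := congrArg Subtype.val h
    have hz : z = z' := by
      have := congrArg (fun g : GL (Fin n) F => g.1 k k) h'
      simp only [mul_ak] at this
      rw [u.2.2.2 k (by simp), u'.2.2.2 k (by simp)] at this
      ext; simpa using this
    subst hz
    have := mul_right_cancel h'
    rw [Prod.mk.injEq]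
    exact ⟨rfl, Subtype.ext this⟩
  · rintro ⟨p, p1, p2, p3⟩
    have hk : p.1 k k ≠ 0 := by
      intro h0
      have hdet : p.1.det ≠ 0 := ((Matrix.isUnit_iff_isUnit_det _).1 p.isUnit).ne_zero
      apply hdet
      rw [Matrix.det_of_isUpperTriangular (fun i j h => p1 i j h)]
      exact Finset.prod_eq_zero (Finset.mem_univ k) h0
    refine ⟨⟨Units.mk0 _ hk, ⟨p * (ak k (Units.mk0 _ hk))⁻¹, ?_⟩⟩, ?_⟩
    · rw [ak_inv]
      refine ⟨fun i j hij => ?_, fun i j hij hj => ?_, fun i hi => ?_⟩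
      · rw [mul_ak, p1 i j hij, zero_mul]
      · rw [mul_ak, p2 i j hij hj, zero_mul]
      · rw [mul_ak]
        by_cases hik : i = k
        · subst hik; simp [hk]
        · rw [p3 i (by simpa using hik), if_neg hik, one_mul]
    · apply Subtype.ext
      simp

lemma card_UT (k : Fin n) (m : ℕ) : (Nat.card (UT m {k} : Subgroup (GL (Fin n) F)) : ℂ) =
    Nat.card Fˣ * Nat.card (UT m ∅ : Subgroup (GL (Fin n) F)) := by
  have := sum_UT (F := F) k m (fun _ => 1)
  simp only [Finset.sum_const, Finset.card_univ, nsmul_eq_mul, mul_one] at this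
  simpa [Nat.card_eq_fintype_card] using this

lemma inv_class {G : Type} [Group G] {f : G → ℂ} (hf : IsClass f) : IsClass (fun g => f g⁻¹) := by
  intro g h
  have := hf g⁻¹ h
  simpa [mul_assoc] using this

lemma mult_step (k : Fin n) {f : GL (Fin n) F → ℂ} (hf : IsClass f) :
    mult (UT (k.1 + 1) ∅) 1 f - mult (UT k.1 ∅) 1 f =
      Nat.card Fˣ * (mult (UT (k.1 + 1) {k}) 1 f - mult (UT k.1 {k}) 1 f) := by
  unfold mult
  simp only [MonoidHom.one_apply, Units.val_one, one_mul]
  have hS := fun m => sum_UT (F := F) k m (fun g => f g⁻¹)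
  rw [hS, hS, card_UT, card_UT]
  have hsplit : ∀ g : Fˣ → ℂ, ∑ z, g z = g 1 + ∑ z ∈ Finset.univ.erase 1, g z := by
    intro g; exact (Finset.add_sum_erase _ _ (Finset.mem_univ _)).symm
  rw [hsplit, hsplit]
  simp only [ak_one, mul_one]
  have hq := card_ne Fˣ
  have hrest : (Nat.card (UT (k.1 + 1) ∅ : Subgroup (GL (Fin n) F)) : ℂ)⁻¹ *
      (∑ z ∈ Finset.univ.erase (1 : Fˣ), ∑ u : (UT (k.1 + 1) ∅ : Subgroup (GL (Fin n) F)),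
        f (u * ak k z)⁻¹) =
      (Nat.card (UT k.1 ∅ : Subgroup (GL (Fin n) F)) : ℂ)⁻¹ *
      (∑ z ∈ Finset.univ.erase (1 : Fˣ), ∑ u : (UT k.1 ∅ : Subgroup (GL (Fin n) F)),
        f (u * ak k z)⁻¹) := by
    rw [Finset.mul_sum, Finset.mul_sum]
    refine Finset.sum_congr rfl fun z hz => ?_
    exact (avg_UT k z (Finset.ne_of_mem_erase hz) (inv_class hf)).symm
  simp only [mul_inv, mul_add, mul_sub, mul_assoc, mul_inv_cancel_left₀ hq] at hrest ⊢
  rw [hrest]; ring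

/-- the degree is congruent to the dimension of the unipotent invariants -/
theorem degree_mod {χ : GL (Fin n) F → ℂ} (h : χ ∈ Irr (GL (Fin n) F)) (m : ℕ) (hm : m ≤ n) :
    ∃ z : ℤ, mult (UT m ∅) 1 χ - mult (UT 0 ∅) 1 χ = Nat.card Fˣ * z := by
  induction m with
  | zero => exact ⟨0, by simp⟩
  | succ m ih =>
    obtain ⟨z, hz⟩ := ih (by omega)
    have := mult_step (F := F) (⟨m, by omega⟩ : Fin n) (irr_class h)
    obtain ⟨a, ha⟩ := mult_nat (UT (m + 1) {⟨m, by omega⟩}) 1 h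
    obtain ⟨b, hb⟩ := mult_nat (UT m {⟨m, by omega⟩}) 1 h
    simp only at this
    refine ⟨z + (a - b), ?_⟩
    rw [ha, hb] at this
    push_cast
    rw [mul_add, ← hz, ← this]; ring

theorem degree_mod' {χ : GL (Fin n) F → ℂ} (h : χ ∈ Irr (GL (Fin n) F)) :
    ∃ z : ℤ, χ 1 - mult (UT 0 ∅) 1 χ = Nat.card Fˣ * z := by
  obtain ⟨z, hz⟩ := degree_mod h n le_rfl
  refine ⟨z, ?_⟩
  rw [← hz]
  congr 1
  have : (UT n ∅ : Subgroup (GL (Fin n) F)) = ⊥ := by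
    rw [eq_bot_iff]
    rintro g ⟨h1, h2, h3⟩
    rw [Subgroup.mem_bot]
    ext i j
    rcases lt_trichotomy i j with hij | hij | hij
    · rw [h2 i j hij j.2]; simp [hij.ne]
    · subst hij; rw [h3 i (by simp)]; simp
    · rw [h1 i j hij]; simp [hij.ne']
  rw [this]
  unfold mult
  have hd : ((default : (⊥ : Subgroup (GL (Fin n) F))) : GL (Fin n) F) = 1 :=
    Subgroup.mem_bot.1 (default : (⊥ : Subgroup (GL (Fin n) F))).2
  simp [hd]

end Theta

section Comb

variable {n : ℕ} {L : Type}

/-- size of a colour class -/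
def siz (κ : Fin n → L) (k : L) : ℕ := (Finset.univ.filter fun i => κ i = k).card

/-- level functions which are standard on each colour class -/
def Std (κ : Fin n → L) (l : Fin n → ℕ) : Prop :=
  (∀ i i', κ i = κ i' → l i = l i' → i = i') ∧ ∀ i, l i < siz κ (κ i)

lemma Std.exists {κ : Fin n → L} {l : Fin n → ℕ} (h : Std κ l) {k : L} {m : ℕ}
    (hm : m < siz κ k) : ∃ i, κ i = k ∧ l i = m := by
  have h1 : (Finset.univ.filter fun i => κ i = k).image l = Finset.range (siz κ k) := by
    apply Finset.eq_of_subset_of_card_le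
    · intro m hm
      simp only [Finset.mem_image, Finset.mem_filter, Finset.mem_univ, true_and] at hm
      obtain ⟨i, hi, rfl⟩ := hm
      rw [Finset.mem_range, ← hi]
      exact h.2 i
    · rw [Finset.card_range, Finset.card_image_of_injOn]
      · exact le_rfl
      · intro i hi i' hi' e
        simp only [Finset.coe_filter, Finset.mem_univ, true_and, Set.mem_ofPred_eq] at hi hi'
        exact h.1 i i' (hi.trans hi'.symm) e
  have : m ∈ (Finset.univ.filter fun i => κ i = k).image l := by rw [h1]; simpa using hm
  simpa using this

lemma pair_count (κ : Fin n → L) {O : Type} [LinearOrder O] (g : Fin n → O)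
    (h : ∀ i i', κ i = κ i' → g i = g i' → i = i') :
    2 * ∑ i, (Finset.univ.filter fun i' => κ i' = κ i ∧ g i' < g i).card + n =
      ∑ i, siz κ (κ i) := by
  have h1 : ∀ i, siz κ (κ i) = (Finset.univ.filter fun i' => κ i' = κ i ∧ g i' < g i).card +
      (Finset.univ.filter fun i' => κ i' = κ i ∧ g i < g i').card + 1 := by
    intro i
    have : (Finset.univ.filter fun i' => κ i' = κ i) =
      ((Finset.univ.filter fun i' => κ i' = κ i ∧ g i' < g i) ∪
      (Finset.univ.filter fun i' => κ i' = κ i ∧ g i < g i')) ∪ {i} := by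
      ext i'
      simp only [Finset.mem_filter, Finset.mem_univ, true_and, Finset.mem_union,
        Finset.mem_singleton]
      constructor
      · intro hk
        rcases lt_trichotomy (g i') (g i) with hg | hg | hg
        · exact Or.inl (Or.inl ⟨hk, hg⟩)
        · exact Or.inr (h _ _ hk hg)
        · exact Or.inl (Or.inr ⟨hk, hg⟩)
      · rintro ((h | h) | h)
        · exact h.1
        · exact h.1
        · rw [h]
    rw [siz, this, Finset.card_union_of_disjoint, Finset.card_union_of_disjoint,
      Finset.card_singleton]
    · rw [Finset.disjoint_filter]
      rintro x _ ⟨_, h1⟩ ⟨_, h2⟩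
      exact lt_asymm h1 h2
    · simp
  have h2 : ∑ i, (Finset.univ.filter fun i' => κ i' = κ i ∧ g i < g i').card =
      ∑ i, (Finset.univ.filter fun i' => κ i' = κ i ∧ g i' < g i).card := by
    simp only [Finset.card_filter]
    rw [Finset.sum_comm]
    refine Finset.sum_congr rfl fun i _ => Finset.sum_congr rfl fun i' _ => ?_
    rw [eq_comm (a := κ i)]
  simp only [h1, Finset.sum_add_distrib, h2]
  simp; ring

/-- the standard level function of a colouring -/
def lev (c : Fin n → L) (i : Fin n) : ℕ :=
  (Finset.univ.filter fun i' => c i' = c i ∧ i' < i).card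

lemma lev_std (c : Fin n → L) : Std c (lev c) := by
  constructor
  · intro i i' hc hl
    have key : ∀ i i' : Fin n, c i = c i' → i < i' → lev c i < lev c i' := by
      intro i i' hc hlt
      apply Finset.card_lt_card
      rw [Finset.ssubset_iff_of_subset]
      · refine ⟨i, ?_, ?_⟩
        · simp [hc, hlt]
        · simp
      · intro x
        simp only [Finset.mem_filter, Finset.mem_univ, true_and]
        rintro ⟨h1, h2⟩
        exact ⟨h1.trans hc, h2.trans hlt⟩
    rcases lt_trichotomy i i' with h | h | h
    · exact absurd hl (key i i' hc h).ne
    · exact h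
    · exact absurd hl (key i' i hc.symm h).ne'
  · intro i
    apply Finset.card_lt_card
    rw [Finset.ssubset_iff_of_subset]
    · exact ⟨i, by simp, by simp⟩
    · intro x
      simp only [Finset.mem_filter, Finset.mem_univ, true_and]
      exact fun h => h.1

/-- the size statistic -/
def Psi (c : Fin n → L) : ℕ := ∑ i, lev c i

lemma Psi_eq (c : Fin n → L) : 2 * Psi c + n = ∑ i, siz c (c i) :=
  pair_count c (id : Fin n → Fin n) (fun i i' _ h => h)

lemma siz_perm (c : Fin n → L) (w : Equiv.Perm (Fin n)) (k : L) :
    siz (fun i => c (w i)) k = siz c k := by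
  unfold siz
  refine Finset.card_bij (fun i _ => w i) ?_ ?_ ?_
  · intro i; simp
  · intro i _ i' _ h; exact w.injective h
  · intro i hi; exact ⟨w.symm i, by simpa using hi, by simp⟩

lemma level_compare {c : Fin n → L} {w : Equiv.Perm (Fin n)} {l : Fin n → ℕ}
    (h : ∀ i i', c (w i) = c (w i') → l i = l i' → i = i') :
    Psi c ≤ ∑ i, l i ∧ (Psi c = ∑ i, l i → Std (fun i => c (w i)) l) := by
  set κ : Fin n → L := fun i => c (w i) with hκ
  have h1 := pair_count κ l h
  have h2 : ∑ i, siz κ (κ i) = ∑ i, siz c (c i) := by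
    refine Eq.trans ?_ (Equiv.sum_comp w fun i => siz c (c i))
    refine Finset.sum_congr rfl fun i _ => ?_
    exact siz_perm c w _
  have h3 := Psi_eq c
  have h4 : ∑ i, (Finset.univ.filter fun i' => κ i' = κ i ∧ l i' < l i).card = Psi c := by omega
  have h5 : ∀ i, (Finset.univ.filter fun i' => κ i' = κ i ∧ l i' < l i).card ≤ l i := by
    intro i
    have : (Finset.univ.filter fun i' => κ i' = κ i ∧ l i' < l i).card ≤
        (Finset.range (l i)).card := by
      apply Finset.card_le_card_of_injOn l
      · intro x hx
        simp only [Finset.coe_filter, Finset.mem_univ, true_and, Set.mem_ofPred_eq] at hx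
        simpa using hx.2
      · intro x hx y hy e
        simp only [Finset.coe_filter, Finset.mem_univ, true_and, Set.mem_ofPred_eq] at hx hy
        exact h x y (hx.1.trans hy.1.symm) e
    simpa using this
  constructor
  · rw [← h4]; exact Finset.sum_le_sum fun i _ => h5 i
  · intro e
    rw [← h4] at e
    have h6 := (Finset.sum_eq_sum_iff_of_le fun i _ => h5 i).1 e
    refine ⟨h, fun i => ?_⟩
    rw [← h6 i (Finset.mem_univ i)]
    apply Finset.card_lt_card
    rw [Finset.ssubset_iff_of_subset]
    · exact ⟨i, by simp, by simp⟩
    · intro x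
      simp only [Finset.mem_filter, Finset.mem_univ, true_and]
      exact fun h => h.1

variable {A : Type}

lemma count_labels {κ : Fin n → L} {l : Fin n → ℕ} (h : Std κ l) (col : Fin n → A) (γ : L → A)
    (hγ : ∀ i, γ (κ i) = col i) (a : A) (m : ℕ) :
    ((Finset.univ.image κ).filter fun k => γ k = a ∧ m < siz κ k).card =
      (Finset.univ.filter fun i => col i = a ∧ l i = m).card := by
  symm
  refine Finset.card_bij (fun i _ => κ i) ?_ ?_ ?_
  · intro i hi
    simp only [Finset.mem_filter, Finset.mem_univ, true_and] at hi
    simp only [Finset.mem_filter, Finset.mem_image, Finset.mem_univ, true_and]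
    refine ⟨⟨i, rfl⟩, (hγ i).trans hi.1, ?_⟩
    rw [← hi.2]; exact h.2 i
  · intro i hi i' hi' e
    simp only [Finset.mem_filter, Finset.mem_univ, true_and] at hi hi'
    exact h.1 i i' e (hi.2.trans hi'.2.symm)
  · intro k hk
    simp only [Finset.mem_filter, Finset.mem_image, Finset.mem_univ, true_and] at hk
    obtain ⟨i, hi, hl⟩ := h.exists hk.2.2
    refine ⟨i, ?_, hi⟩
    simp only [Finset.mem_filter, Finset.mem_univ, true_and]
    exact ⟨by rw [← hγ, hi]; exact hk.2.1, hl⟩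

lemma count_labels' {L' : Type} {κ : Fin n → L} {κ' : Fin n → L'} {l : Fin n → ℕ}
    (h : Std κ l) (h' : Std κ' l) (col : Fin n → A) (γ : L → A) (γ' : L' → A)
    (hγ : ∀ i, γ (κ i) = col i) (hγ' : ∀ i, γ' (κ' i) = col i) (a : A) (m : ℕ) :
    ((Finset.univ.image κ).filter fun k => γ k = a ∧ siz κ k = m).card =
      ((Finset.univ.image κ').filter fun k => γ' k = a ∧ siz κ' k = m).card := by
  have hpos : ∀ {L : Type} (κ : Fin n → L), ∀ k ∈ Finset.univ.image κ, 0 < siz κ k := by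
    intro L κ k hk
    simp only [Finset.mem_image, Finset.mem_univ, true_and] at hk
    obtain ⟨i, rfl⟩ := hk
    exact Finset.card_pos.2 ⟨i, by simp⟩
  cases m with
  | zero =>
    rw [Finset.filter_eq_empty_iff.2, Finset.filter_eq_empty_iff.2]
    · rfl
    · intro k hk h; have := hpos _ _ hk; omega
    · intro k hk h; have := hpos _ _ hk; omega
  | succ m =>
    have split : ∀ {L : Type} (κ : Fin n → L) (γ : L → A),
      ((Finset.univ.image κ).filter fun k => γ k = a ∧ m < siz κ k).card =
      ((Finset.univ.image κ).filter fun k => γ k = a ∧ siz κ k = m + 1).card +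
      ((Finset.univ.image κ).filter fun k => γ k = a ∧ m + 1 < siz κ k).card := by
      intro L κ γ
      rw [← Finset.card_union_of_disjoint]
      · congr 1
        ext k
        simp only [Finset.mem_filter, Finset.mem_union]
        constructor
        · rintro ⟨h1, h2, h3⟩
          rcases Nat.lt_or_ge (m + 1) (siz κ k) with h | h
          · exact Or.inr ⟨h1, h2, h⟩
          · exact Or.inl ⟨h1, h2, by omega⟩
        · rintro (⟨h1, h2, h3⟩ | ⟨h1, h2, h3⟩)
          · exact ⟨h1, h2, by omega⟩
          · exact ⟨h1, h2, by omega⟩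
      · rw [Finset.disjoint_filter]
        rintro k _ ⟨_, h1⟩ ⟨_, h2⟩
        omega
    have e1 := split κ γ
    have e2 := split κ' γ'
    rw [count_labels h col γ hγ, count_labels h col γ hγ] at e1
    rw [count_labels h' col γ' hγ', count_labels h' col γ' hγ'] at e2
    omega

lemma matching {L' : Type} {κ : Fin n → L} {κ' : Fin n → L'} {l : Fin n → ℕ}
    (h : Std κ l) (h' : Std κ' l) (col : Fin n → A) (γ : L → A) (γ' : L' → A)
    (hγ : ∀ i, γ (κ i) = col i) (hγ' : ∀ i, γ' (κ' i) = col i) :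
    ∃ π : Equiv.Perm (Fin n), (∀ i i', κ i = κ i' ↔ κ' (π i) = κ' (π i')) ∧
      ∀ i, γ (κ i) = γ' (κ' (π i)) := by
  have hE : ∀ z : A × ℕ, Nonempty ({k : {k // k ∈ Finset.univ.image κ} // (γ k.1, siz κ k.1) = z} ≃
      {k : {k // k ∈ Finset.univ.image κ'} // (γ' k.1, siz κ' k.1) = z}) := by
    rintro ⟨a, m⟩
    have hc := count_labels' h h' col γ γ' hγ hγ' a m
    have e : ∀ {L : Type} (S : Finset L) (p : L → Prop) (q : {k // k ∈ S} → Prop),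
        (∀ k, q k ↔ p k.1) → Nat.card {k : {k // k ∈ S} // q k} = (S.filter p).card := by
      intro L S p q hq
      rw [Nat.card_eq_fintype_card, Fintype.card_subtype]
      refine Finset.card_bij (fun k _ => k.1) ?_ ?_ ?_
      · intro k hk
        simp only [Finset.mem_filter, Finset.mem_univ, true_and] at hk ⊢
        exact ⟨k.2, (hq k).1 hk⟩
      · intro k _ k' _ e; exact Subtype.ext e
      · intro k hk
        rw [Finset.mem_filter] at hk
        exact ⟨⟨k, hk.1⟩, by simp [hq, hk.2], rfl⟩
    rw [← Fintype.card_eq, Fintype.card_eq_nat_card, Fintype.card_eq_nat_card, e _ (fun k => γ k = a ∧ siz κ k = m) _ (by simp),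
      e _ (fun k => γ' k = a ∧ siz κ' k = m) _ (by simp)]
    convert hc
  let E : {k // k ∈ Finset.univ.image κ} ≃ {k // k ∈ Finset.univ.image κ'} := Equiv.ofFiberEquiv (f := fun k : {k // k ∈ Finset.univ.image κ} => (γ k.1, siz κ k.1))
    (g := fun k : {k // k ∈ Finset.univ.image κ'} => (γ' k.1, siz κ' k.1)) (fun z => Classical.choice (hE z))
  have hEmap : ∀ k : {k // k ∈ Finset.univ.image κ}, (γ' (E k).1, siz κ' (E k).1) = (γ k.1, siz κ k.1) := fun k =>
    Equiv.ofFiberEquiv_map (f := fun k : {k // k ∈ Finset.univ.image κ} => (γ k.1, siz κ k.1))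
    (g := fun k : {k // k ∈ Finset.univ.image κ'} => (γ' k.1, siz κ' k.1)) (fun z => Classical.choice (hE z)) k
  let s : Fin n → {k // k ∈ Finset.univ.image κ} := fun i => ⟨κ i, by simp⟩
  let s' : Fin n → {k // k ∈ Finset.univ.image κ'} := fun i => ⟨κ' i, by simp⟩
  have hP : ∀ z : {k // k ∈ Finset.univ.image κ'}, Nonempty ({i // E (s i) = z} ≃ {i // s' i = z}) := by
    intro z
    rw [← Fintype.card_eq]
    obtain ⟨k, rfl⟩ := E.surjective z
    have := congrArg Prod.snd (hEmap k)
    simp only [siz] at this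
    rw [Fintype.card_subtype, Fintype.card_subtype]
    refine Eq.trans ?_ (this.symm.trans ?_)
    · congr 1
      refine Finset.filter_congr fun i _ => ?_
      rw [E.apply_eq_iff_eq]
      exact Subtype.ext_iff
    · congr 1
      refine Finset.filter_congr fun i _ => ?_
      exact ⟨fun h => Subtype.ext h, fun h => congrArg Subtype.val h⟩
  let π : Fin n ≃ Fin n := Equiv.ofFiberEquiv (f := fun i => E (s i)) (g := s')
    (fun z => Classical.choice (hP z))
  have hπ : ∀ i, s' (π i) = E (s i) := fun i =>
    Equiv.ofFiberEquiv_map (f := fun i => E (s i)) (g := s') (fun z => Classical.choice (hP z)) i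
  refine ⟨π, fun i i' => ?_, fun i => ?_⟩
  · have h1 : κ i = κ i' ↔ s i = s i' := ⟨fun h => Subtype.ext h, fun h => congrArg Subtype.val h⟩
    have h2 : κ' (π i) = κ' (π i') ↔ s' (π i) = s' (π i') := ⟨fun h => Subtype.ext h, fun h => congrArg Subtype.val h⟩
    rw [h1, h2, hπ, hπ, E.apply_eq_iff_eq]
  · have h1 := congrArg Prod.fst (hEmap (s i))
    have h2 : κ' (π i) = (E (s i)).1 := congrArg Subtype.val (hπ i)
    rw [h2]; exact h1.symm

end Comb

section Rows

lemma mult_conj {G : Type} [Group G] [Fintype G] {P Q : Subgroup G} {l : P →* ℂˣ} {m : Q →* ℂˣ}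
    (x : G) (h1 : ∀ g, g ∈ P ↔ x * g * x⁻¹ ∈ Q)
    (h2 : ∀ (p : P) (q : Q), (q : G) = x * p * x⁻¹ → l p = m q) {f : G → ℂ} (hf : IsClass f) :
    mult P l f = mult Q m f := by
  let e : P ≃ Q :=
    { toFun := fun p => ⟨x * p * x⁻¹, (h1 _).1 p.2⟩
      invFun := fun q => ⟨x⁻¹ * q * x, by rw [h1]; simp [mul_assoc]⟩
      left_inv := fun p => by ext; simp [mul_assoc]
      right_inv := fun q => by ext; simp [mul_assoc] }
  unfold mult
  rw [Nat.card_congr e]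
  congr 1
  refine Fintype.sum_equiv e _ _ fun p => ?_
  rw [h2 p (e p) rfl]
  congr 1
  have : ((e p : Q) : G)⁻¹ = x * (p : G)⁻¹ * x⁻¹ := by simp [e, mul_assoc]
  rw [this, hf]

variable {K : Type} [CommGroup K] [Fintype K] {n : ℕ}

lemma row_eq {L L' : Type} {c : Fin n → L} {c' : Fin n → L'} {α : L → (K →* ℂˣ)}
    {α' : L' → (K →* ℂˣ)}
    (ρ : Equiv.Perm (Fin n)) (h1 : ∀ i i', c i = c i' ↔ c' (ρ i) = c' (ρ i'))
    (h2 : ∀ i, α (c i) = α' (c' (ρ i))) {f : Mon K n → ℂ} (hf : IsClass f) :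
    mult (Mc K c) (th c α 1) f = mult (Mc K c') (th c' α' 1) f := by
  refine mult_conj (⟨fun _ => 1, ρ⟩ : Mon K n) ?_ ?_ hf
  · intro g
    rw [mem_Mc, mem_Mc]
    simp only [Mon.mul_w, Mon.inv_w, Equiv.Perm.mul_apply]
    constructor
    · intro h i
      have := (h1 _ _).1 (h (ρ⁻¹ i))
      simpa using this
    · intro h i
      rw [h1]
      have := h (ρ i)
      simpa using this
  · intro p q e
    rw [th_apply, th_apply]
    simp only [MonoidHom.one_apply, mul_one]
    rw [← Equiv.prod_comp ρ (fun i => α' (c' i) (q.1.t i))]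
    refine Finset.prod_congr rfl fun i _ => ?_
    rw [e, h2]
    simp

/-- the sign character with complex values -/
def sgn (n : ℕ) : Equiv.Perm (Fin n) →* ℂˣ :=
  (Units.map ((Int.castRingHom ℂ : ℤ →+* ℂ) : ℤ →* ℂ)).comp Equiv.Perm.sign

lemma sgn_swap {i j : Fin n} (h : i ≠ j) : sgn n (Equiv.swap i j) ≠ 1 := by
  intro e
  have := congrArg Units.val e
  simp [sgn, Equiv.Perm.sign_swap h] at this
  norm_num at this

/-- the conjugate colouring -/
def dc (c : Fin n → Fin n) (α : Fin n → (K →* ℂˣ)) (i : Fin n) : (K →* ℂˣ) × ℕ :=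
  (α (c i), lev c i)

variable {c c' : Fin n → Fin n} {α α' : Fin n → (K →* ℂˣ)}

lemma adm_facts {x : Mon K n} (h : adm (Mc K c) (Mc K (dc c' α')) (th c α 1)
    (th (dc c' α') Prod.fst (sgn n)) x) :
    (∀ i, α (c (x.w i)) = α' (c' i)) ∧
      ∀ i i', c (x.w i) = c (x.w i') → lev c' i = lev c' i' → i = i' := by
  rw [adm_Mc] at h
  refine ⟨h.1, fun i i' h1 h2 => ?_⟩
  by_contra hne
  have hd : dc c' α' i = dc c' α' i' := by
    have e1 : α' (c' i) = α' (c' i') := by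
      have a1 := h.1 i
      have a2 := h.1 i'
      simp only [dc] at a1 a2
      rw [← a1, ← a2, h1]
    simp only [dc, h2, e1]
  refine sgn_swap hne (h.2 (Equiv.swap i i') ?_ ?_).symm
  · intro j
    by_cases hj : j = i
    · subst hj; rw [Equiv.swap_apply_left, hd]
    · by_cases hj' : j = i'
      · subst hj'; rw [Equiv.swap_apply_right, hd]
      · rw [Equiv.swap_apply_of_ne_of_ne hj hj']
  · intro j
    by_cases hj : j = i
    · subst hj; rw [Equiv.swap_apply_left, h1]
    · by_cases hj' : j = i'
      · subst hj'; rw [Equiv.swap_apply_right, h1]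
      · rw [Equiv.swap_apply_of_ne_of_ne hj hj']

lemma N_tri (h : ∑ ψ : Irr (Mon K n), mult (Mc K c) (th c α 1) ψ *
      mult (Mc K (dc c' α')) (th (dc c' α') Prod.fst (sgn n)) ψ ≠ 0) :
    Psi c < Psi c' ∨ ∀ ψ : Irr (Mon K n), mult (Mc K c) (th c α 1) (ψ : Mon K n → ℂ) =
      mult (Mc K c') (th c' α' 1) ψ := by
  rw [parseval] at h
  have : ∃ x, adm (Mc K c) (Mc K (dc c' α')) (th c α 1)
    (th (dc c' α') Prod.fst (sgn n)) x := by
    by_contra hx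
    push Not at hx
    exact h (ker_zero _ _ _ _ hx)
  obtain ⟨x, hx⟩ := this
  obtain ⟨hα, hinj⟩ := adm_facts hx
  obtain ⟨h1, h2⟩ := level_compare hinj
  rcases lt_or_eq_of_le h1 with h1 | h1
  · exact Or.inl h1
  · right
    intro ψ
    have hS := h2 h1
    obtain ⟨π, hπ1, hπ2⟩ := matching hS (lev_std c') (fun i => α' (c' i)) α α' hα (fun _ => rfl)
    refine row_eq (π * x.w⁻¹) ?_ ?_ (irr_class ψ.2)
    · intro i i'
      have := hπ1 (x.w⁻¹ i) (x.w⁻¹ i')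
      simpa using this
    · intro i
      have := hπ2 (x.w⁻¹ i)
      simpa using this

lemma N_diag : ∑ ψ : Irr (Mon K n), mult (Mc K c) (th c α 1) ψ *
      mult (Mc K (dc c α)) (th (dc c α) Prod.fst (sgn n)) ψ = 1 := by
  rw [parseval]
  refine ker_one _ _ _ _ 1 ?_ ?_
  · rw [adm_Mc]
    refine ⟨fun i => rfl, fun v h1 h2 => ?_⟩
    have : v = 1 := by
      ext1 i
      refine (lev_std c).1 _ _ (h2 i) ?_
      exact congrArg Prod.snd (h1 i)
    rw [this, map_one, map_one]
  · intro x hx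
    obtain ⟨hα, hinj⟩ := adm_facts hx
    have hS := (level_compare hinj).2 rfl
    have hv : ∀ i, ∃ j, c j = c (x.w i) ∧ lev c j = lev c i := by
      intro i
      apply (lev_std c).exists
      have := hS.2 i
      rwa [siz_perm] at this
    choose v hv1 hv2 using hv
    have hvi : Function.Injective v := by
      intro i i' e
      apply hinj
      · rw [← hv1, ← hv1, e]
      · rw [← hv2 i, ← hv2 i', e]
    let V : Equiv.Perm (Fin n) := Equiv.ofBijective v (Finite.injective_iff_bijective.1 hvi)
    have hV : ∀ i, V i = v i := fun _ => rfl
    rw [mem_dcl_Mc]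
    refine ⟨x.w * V⁻¹, V, ?_, ?_, by simp⟩
    · intro i
      obtain ⟨j, rfl⟩ := V.surjective i
      have : (x.w * V⁻¹) (V j) = x.w j := by simp
      rw [this, hV, hv1]
    · intro i
      simp only [dc, hV, hv1, hv2, hα]

end Rows

section Inj

open Equiv.Perm in
lemma isCycleOn_sc {n : ℕ} (σ : Equiv.Perm (Fin n)) (b : Fin n) :
    σ.IsCycleOn {x | SameCycle σ b x} := by
  refine ⟨⟨?_, σ.injective.injOn, ?_⟩, ?_⟩
  · intro x hx
    exact hx.trans (by simp [SameCycle.refl])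
  · intro x hx
    refine ⟨σ⁻¹ x, ?_, by simp⟩
    exact SameCycle.trans hx (by simp [SameCycle.refl])
  · intro x hx y hy
    exact (SameCycle.symm hx).trans hy

open Equiv.Perm in
lemma conj_cycle {n : ℕ} (σ τ : Equiv.Perm (Fin n))
    (h : ∀ i j, SameCycle σ i j ↔ SameCycle τ i j) :
    ∃ π : Equiv.Perm (Fin n), σ = π * τ * π⁻¹ ∧ ∀ i, SameCycle τ (π i) i := by
  let b : Fin n → Fin n := fun i => (Quotient.mk (SameCycle.setoid τ) i).out
  have hb : ∀ i, SameCycle τ (b i) i := fun i => Quotient.mk_out (s := SameCycle.setoid τ) i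
  have hbb : ∀ i j, SameCycle τ i j → b i = b j := by
    intro i j hij
    have : Quotient.mk (SameCycle.setoid τ) i = Quotient.mk (SameCycle.setoid τ) j :=
      Quotient.sound hij
    simp only [b, this]
  have hpow : ∀ b (m m' : ℕ), (τ ^ m) b = (τ ^ m') b ↔ (σ ^ m) b = (σ ^ m') b := by
    intro b m m'
    let s : Finset (Fin n) := Finset.univ.filter fun x => SameCycle τ b x
    have hs : (s : Set (Fin n)) = {x | SameCycle τ b x} := by ext x; simp [s]
    have hs' : (s : Set (Fin n)) = {x | SameCycle σ b x} := by ext x; simp [s, h]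
    have h1 : τ.IsCycleOn s := by rw [hs]; exact isCycleOn_sc τ b
    have h2 : σ.IsCycleOn s := by rw [hs']; exact isCycleOn_sc σ b
    have hbs : b ∈ s := by simp [s, SameCycle.refl]
    rw [h1.pow_apply_eq_pow_apply hbs, h2.pow_apply_eq_pow_apply hbs]
  have hm : ∀ i, ∃ m : ℕ, (τ ^ m) (b i) = i := fun i => by
    obtain ⟨m, _, hm⟩ := (hb i).exists_pow_eq'
    exact ⟨m, hm⟩
  choose m hm using hm
  let p : Fin n → Fin n := fun i => (σ ^ (m i)) (b i)
  have hp : ∀ i, SameCycle τ (p i) i := by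
    intro i
    have h1 : SameCycle σ (p i) (b i) := by
      apply SameCycle.symm
      exact ⟨m i, by simp [p]⟩
    exact ((h _ _).1 h1).trans (hb i)
  have hpi : Function.Injective p := by
    intro i j e
    have h1 : SameCycle τ i j := by
      have := hp i
      rw [e] at this
      exact this.symm.trans (hp j)
    have h2 := hbb _ _ h1
    have h3 : (σ ^ (m i)) (b i) = (σ ^ (m j)) (b i) := by
      have : (σ ^ (m i)) (b i) = (σ ^ (m j)) (b j) := e
      rw [this, h2]
    have h4 := (hpow _ _ _).2 h3
    rw [hm, h2, hm] at h4
    exact h4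
  let π : Equiv.Perm (Fin n) := Equiv.ofBijective p (Finite.injective_iff_bijective.1 hpi)
  refine ⟨π, ?_, hp⟩
  rw [eq_mul_inv_iff_mul_eq]
  ext1 i
  change σ (p i) = p (τ i)
  have h2 : b (τ i) = b i := hbb _ _ (by simp [SameCycle.refl])
  have h3 : (τ ^ (m (τ i))) (b i) = (τ ^ (m i + 1)) (b i) := by
    rw [← h2, hm, h2, pow_succ', Equiv.Perm.mul_apply, hm]
  have h4 := (hpow _ _ _).1 h3
  change _ = (σ ^ (m (τ i))) (b (τ i))
  rw [h2, h4, pow_succ', Equiv.Perm.mul_apply]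

variable {K : Type} [CommGroup K] [Fintype K] {n : ℕ}

/-- partial Fourier transform -/
def FT (g : Mon K n → ℂ) (θ : Fin n → (K →* ℂˣ)) (σ : Equiv.Perm (Fin n)) : ℂ :=
  ∑ t : Fin n → K, ((∏ i, θ i (t i) : ℂˣ) : ℂ) * g ⟨t, σ⟩

lemma FT_supp {g : Mon K n → ℂ} (hg : IsClass g) {θ : Fin n → (K →* ℂˣ)}
    {σ : Equiv.Perm (Fin n)} (h : FT g θ σ ≠ 0) (j : Fin n) : θ (σ j) = θ j := by
  have key : ∀ s : Fin n → K, ((∏ i, θ i (s i) : ℂˣ) : ℂ) * FT g θ σ =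
      ((∏ i, θ i (s (σ.symm i)) : ℂˣ) : ℂ) * FT g θ σ := by
    intro s
    unfold FT
    rw [Finset.mul_sum, Finset.mul_sum]
    refine Fintype.sum_equiv (Equiv.mulRight (s * (fun i => (s (σ.symm i))⁻¹))) _ _ fun t => ?_
    have e1 : g ⟨t, σ⟩ = g ⟨(Equiv.mulRight (s * (fun i => (s (σ.symm i))⁻¹))) t, σ⟩ := by
      rw [← hg ⟨t, σ⟩ ⟨s, 1⟩]
      congr 1
      ext i
      · simp [mul_comm]
        rfl
      · simp
    rw [← e1, ← mul_assoc, ← mul_assoc, ← Units.val_mul, ← Units.val_mul,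
      ← Finset.prod_mul_distrib, ← Finset.prod_mul_distrib]
    congr 2
    refine Finset.prod_congr rfl fun i _ => ?_
    simp only [Equiv.coe_mulRight, Pi.mul_apply, map_mul, map_inv]
    rw [mul_comm (θ i (t i)), ← mul_assoc, mul_left_comm, mul_inv_cancel, mul_one]
  ext1 a
  have := mul_right_cancel₀ h (key (Pi.mulSingle j a))
  have := Units.ext this
  rw [← Equiv.prod_comp σ (fun i => θ i ((Pi.mulSingle j a : Fin n → K) (σ.symm i)))] at this
  rw [Finset.prod_eq_single j, Finset.prod_eq_single j] at this
  · simpa using this.symm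
  · intro b _ hb; rw [Equiv.symm_apply_apply, Pi.mulSingle_eq_of_ne hb, map_one]
  · simp
  · intro b _ hb; rw [Pi.mulSingle_eq_of_ne hb, map_one]
  · simp

lemma FT_conj {g : Mon K n → ℂ} (hg : IsClass g) (θ : Fin n → (K →* ℂˣ))
    (σ π : Equiv.Perm (Fin n)) : FT g θ (π * σ * π⁻¹) = FT g (fun i => θ (π i)) σ := by
  unfold FT
  symm
  refine Fintype.sum_equiv (Equiv.arrowCongr π (Equiv.refl K)) _ _ fun t => ?_
  congr 1
  · congr 1
    rw [← Equiv.prod_comp π (fun i => θ i ((Equiv.arrowCongr π (Equiv.refl K)) t i))]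
    refine Finset.prod_congr rfl fun i _ => ?_
    simp
  · rw [← hg ⟨t, σ⟩ ⟨1, π⟩]
    congr 1
    ext i
    · simp
    · simp

lemma mult_FT (f : Mon K n → ℂ) (c : Fin n → Fin n) (α : Fin n → (K →* ℂˣ)) :
    mult (Mc K c) (th c α 1) f = (Nat.card (Mc K c) : ℂ)⁻¹ *
      ∑ σ ∈ Finset.univ.filter (fun σ : Equiv.Perm (Fin n) => ∀ i, c (σ i) = c i),
        FT (fun m => f m⁻¹) (fun i => α (c i)) σ := by
  unfold mult FT
  congr 1
  have h1 : ∑ p : Mc K c, ((th c α 1 p : ℂˣ) : ℂ) * f (p : Mon K n)⁻¹ =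
      ∑ m : Mon K n, if m ∈ Mc K c then
        ((∏ i, α (c i) (m.t i) : ℂˣ) : ℂ) * f m⁻¹ else 0 := by
    rw [← Finset.sum_filter, Finset.sum_subtype (p := fun m => m ∈ Mc K c) _ (by simp)]
    refine Finset.sum_congr rfl fun p _ => ?_
    rw [th_apply]
    simp
  rw [h1, ← Equiv.sum_comp (monEquiv K n).symm, Fintype.sum_prod_type, Finset.sum_comm,
    Finset.sum_filter]
  refine Finset.sum_congr rfl fun σ _ => ?_
  by_cases hσ : ∀ i, c (σ i) = c i
  · rw [if_pos hσ]
    refine Finset.sum_congr rfl fun t _ => ?_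
    exact if_pos hσ
  · rw [if_neg hσ]
    refine Finset.sum_eq_zero fun t _ => ?_
    exact if_neg hσ

lemma FT_zero {f : Mon K n → ℂ} (hf : IsClass f)
    (h : ∀ (c : Fin n → Fin n) (α : Fin n → (K →* ℂˣ)), mult (Mc K c) (th c α 1) f = 0)
    (N : ℕ) : ∀ (σ : Equiv.Perm (Fin n)) (θ : Fin n → (K →* ℂˣ)),
    (Finset.univ.filter fun p : Fin n × Fin n => σ.SameCycle p.1 p.2).card = N →
    FT (fun m => f m⁻¹) θ σ = 0 := by
  have hg : IsClass (fun m => f m⁻¹) := inv_class hf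
  induction N using Nat.strong_induction_on with
  | _ N ih =>
  intro σ θ hN
  by_contra hne
  have hθ := FT_supp hg hne
  have hθ' : ∀ i j, σ.SameCycle i j → θ i = θ j := by
    intro i j hij
    obtain ⟨m, _, rfl⟩ := hij.exists_pow_eq'
    clear hij
    induction m with
    | zero => rfl
    | succ m ih => rw [pow_succ', Equiv.Perm.mul_apply, hθ, ← ih (by omega)]
  let c : Fin n → Fin n := fun i => (Quotient.mk (Equiv.Perm.SameCycle.setoid σ) i).out
  have hc : ∀ i, σ.SameCycle (c i) i := fun i =>
    Quotient.mk_out (s := Equiv.Perm.SameCycle.setoid σ) i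
  have hcc : ∀ i j, σ.SameCycle i j ↔ c i = c j := by
    intro i j
    constructor
    · intro hij
      have : Quotient.mk (Equiv.Perm.SameCycle.setoid σ) i =
        Quotient.mk (Equiv.Perm.SameCycle.setoid σ) j := Quotient.sound hij
      simp only [c, this]
    · intro e
      have := hc i
      rw [e] at this
      exact this.symm.trans (hc j)
  have hθc : (fun i => θ (c i)) = θ := by
    funext i; exact hθ' _ _ (hc i)
  have h0 := h c θ
  rw [mult_FT, hθc] at h0
  have h1 := (mul_eq_zero.1 h0).resolve_left (inv_ne_zero (card_ne _))
  have h2 : ∀ τ ∈ Finset.univ.filter (fun τ : Equiv.Perm (Fin n) => ∀ i, c (τ i) = c i),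
      FT (fun m => f m⁻¹) θ τ = if (∀ i j, τ.SameCycle i j ↔ σ.SameCycle i j) then
        FT (fun m => f m⁻¹) θ σ else 0 := by
    intro τ hτ
    simp only [Finset.mem_filter, Finset.mem_univ, true_and] at hτ
    split_ifs with hs
    · obtain ⟨π, e, hπ⟩ := conj_cycle τ σ hs
      rw [e, FT_conj hg]
      congr 1
      funext i
      exact hθ' _ _ (hπ i)
    · refine ih _ ?_ τ θ rfl
      rw [← hN]
      have hsub : ∀ i j, τ.SameCycle i j → σ.SameCycle i j := by
        intro i j hij
        obtain ⟨m, _, rfl⟩ := hij.exists_pow_eq'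
        rw [hcc]
        clear hij
        induction m with
        | zero => rfl
        | succ m ih => rw [pow_succ', Equiv.Perm.mul_apply, hτ, ← ih (by omega)]
      apply Finset.card_lt_card
      rw [Finset.ssubset_iff_of_subset]
      · push Not at hs
        obtain ⟨i, j, hij⟩ := hs
        rcases hij with hij | hij
        · exact absurd (hsub _ _ hij.1) hij.2
        · exact ⟨(i, j), by simpa using hij.2, by simpa using hij.1⟩
      · intro p
        simp only [Finset.mem_filter, Finset.mem_univ, true_and]
        exact hsub _ _
  rw [Finset.sum_congr rfl h2, Finset.sum_ite, Finset.sum_const_zero, add_zero, Finset.sum_const,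
    nsmul_eq_mul] at h1
  refine (mul_ne_zero ?_ hne) h1
  rw [Nat.cast_ne_zero, ← Nat.pos_iff_ne_zero, Finset.card_pos]
  refine ⟨σ, ?_⟩
  simp only [Finset.mem_filter, Finset.mem_univ, true_and, implies_true, and_true]
  intro i
  rw [← hcc]
  simp [Equiv.Perm.SameCycle.refl]

lemma mon_inj {f : Mon K n → ℂ} (hf : IsClass f)
    (h : ∀ (c : Fin n → Fin n) (α : Fin n → (K →* ℂˣ)), mult (Mc K c) (th c α 1) f = 0) :
    f = 0 := by
  have h0 := fun σ θ => FT_zero hf h _ σ θ rfl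
  suffices hs : ∀ (σ : Equiv.Perm (Fin n)) (t : Fin n → K), f (⟨t, σ⟩ : Mon K n)⁻¹ = 0 by
    funext m
    have := hs (m⁻¹).w (m⁻¹).t
    change f (m⁻¹)⁻¹ = 0 at this
    simpa using this
  intro σ t₀
  have h1 : ∑ θ : Fin n → (K →* ℂˣ), ((∏ i, θ i (t₀⁻¹ i) : ℂˣ) : ℂ) *
      FT (fun m => f m⁻¹) θ σ = 0 := by simp [h0]
  unfold FT at h1
  simp only [Finset.mul_sum] at h1
  rw [Finset.sum_comm] at h1
  have h2 : ∀ t : Fin n → K, ∑ θ : Fin n → (K →* ℂˣ), ((∏ i, θ i (t₀⁻¹ i) : ℂˣ) : ℂ) *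
      (((∏ i, θ i (t i) : ℂˣ) : ℂ) * f (⟨t, σ⟩ : Mon K n)⁻¹) =
      if t = t₀ then (Nat.card K : ℂ) ^ n * f (⟨t, σ⟩ : Mon K n)⁻¹ else 0 := by
    intro t
    have e := sum_dual_pi (t₀⁻¹ * t)
    have : ∀ θ : Fin n → (K →* ℂˣ), ((∏ i, θ i (t₀⁻¹ i) : ℂˣ) : ℂ) *
      (((∏ i, θ i (t i) : ℂˣ) : ℂ) * f (⟨t, σ⟩ : Mon K n)⁻¹) =
      ((∏ i, θ i ((t₀⁻¹ * t) i) : ℂˣ) : ℂ) * f (⟨t, σ⟩ : Mon K n)⁻¹ := by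
      intro θ
      rw [← mul_assoc, ← Units.val_mul, ← Finset.prod_mul_distrib]
      congr 2
      refine Finset.prod_congr rfl fun i _ => ?_
      rw [Pi.mul_apply, map_mul]
    rw [Finset.sum_congr rfl fun θ _ => this θ, ← Finset.sum_mul, e]
    by_cases ht : t = t₀
    · rw [if_pos ht, if_pos (by rw [ht]; simp)]
    · rw [if_neg ht, if_neg, zero_mul]
      rw [inv_mul_eq_one]; exact fun e => ht e.symm
  rw [Finset.sum_congr rfl fun t _ => h2 t, Finset.sum_ite_eq' Finset.univ t₀,
    if_pos (Finset.mem_univ _)] at h1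
  exact (mul_eq_zero.1 h1).resolve_left (pow_ne_zero _ (card_ne K))

end Inj

section Abs

variable {J X : Type} [Fintype J] [Fintype X]

lemma abs_integral (a e : J → X → ℤ) (Ψ : J → ℕ)
    (h1 : ∀ f : X → ℂ, (∀ j, ∑ x, (a j x : ℂ) * f x = 0) → f = 0)
    (h2 : ∀ j, ∑ x, a j x * e j x = 1)
    (h3 : ∀ j j', ∑ x, a j x * e j' x ≠ 0 → Ψ j < Ψ j' ∨ a j = a j') :
    ∃ u : X → J → ℤ, ∀ x y, ∑ j, u x j * a j y = if x = y then 1 else 0 := by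
  suffices H : ∀ v : X → ℤ, v ∈ Submodule.span ℤ (Set.range a) by
    have : ∀ x : X, ∃ u : J → ℤ, ∀ y, ∑ j, u j * a j y = if x = y then 1 else 0 := by
      intro x
      obtain ⟨u, hu⟩ := (Submodule.mem_span_range_iff_exists_fun ℤ).1
        (H fun y => if x = y then 1 else 0)
      refine ⟨u, fun y => ?_⟩
      have := congrFun hu y
      simpa [Finset.sum_apply] using this
    choose u hu using this
    exact ⟨u, hu⟩
  intro v
  let R := Set.range a
  have hR : Fintype R := Fintype.ofFinite R
  let A : R → X → ℂ := fun r x => (r.1 x : ℂ)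
  have hspan : (fun x => (v x : ℂ)) ∈ Submodule.span ℂ (Set.range A) := by
    by_contra hv
    obtain ⟨φ, hφ, hk⟩ := Submodule.exists_le_ker_of_notMem hv
    have hφs : ∀ w : X → ℂ, φ w = ∑ x, w x * φ (Pi.single x 1) := by
      intro w
      conv_lhs => rw [pi_eq_sum_univ' w]
      rw [map_sum]
      refine Finset.sum_congr rfl fun x _ => ?_
      rw [map_smul, smul_eq_mul]
    have := h1 (fun x => φ (Pi.single x 1)) (fun j => by
      have : φ (A ⟨a j, j, rfl⟩) = 0 :=
        LinearMap.mem_ker.1 (hk (Submodule.subset_span ⟨_, rfl⟩))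
      rw [hφs] at this
      exact this)
    apply hφ
    rw [hφs]
    refine Finset.sum_eq_zero fun x _ => ?_
    rw [congrFun this x]; simp
  obtain ⟨c, hc⟩ := (Submodule.mem_span_range_iff_exists_fun ℂ).1 hspan
  have hc' : ∀ x, ∑ r : R, c r * (r.1 x : ℂ) = v x := by
    intro x
    have := congrFun hc x
    simpa [Finset.sum_apply, A] using this
  have key : ∀ N : ℕ, ∀ j, Ψ j = N → ∃ z : ℤ, c ⟨a j, j, rfl⟩ = z := by
    intro N
    induction N using Nat.strong_induction_on with
    | _ N ih =>
    intro j hj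
    have p1 : ∑ r : R, c r * ((∑ x, r.1 x * e j x : ℤ) : ℂ) = ((∑ x, v x * e j x : ℤ) : ℂ) := by
      push_cast
      simp only [Finset.mul_sum]
      rw [Finset.sum_comm]
      refine Finset.sum_congr rfl fun x _ => ?_
      rw [← hc', Finset.sum_mul]
      refine Finset.sum_congr rfl fun r _ => by ring
    rw [← Finset.add_sum_erase _ _ (Finset.mem_univ (⟨a j, j, rfl⟩ : R))] at p1
    simp only [h2 j, Int.cast_one, mul_one] at p1
    have p2 : ∀ r ∈ Finset.univ.erase (⟨a j, j, rfl⟩ : R),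
        ∃ z : ℤ, c r * ((∑ x, r.1 x * e j x : ℤ) : ℂ) = z := by
      rintro ⟨_, j', rfl⟩ hr
      by_cases h0 : ∑ x, a j' x * e j x = 0
      · exact ⟨0, by simp only [h0]; simp⟩
      · rcases h3 _ _ h0 with hlt | heq
        · obtain ⟨z, hz⟩ := ih _ (hj ▸ hlt) j' rfl
          exact ⟨z * ∑ x, a j' x * e j x, by rw [hz]; push_cast; ring⟩
        · exact absurd (Subtype.ext heq) (Finset.ne_of_mem_erase hr)
    choose! z hz using p2
    rw [Finset.sum_congr rfl hz] at p1
    refine ⟨(∑ x, v x * e j x) - ∑ r ∈ Finset.univ.erase (⟨a j, j, rfl⟩ : R), z r, ?_⟩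
    push_cast at p1 ⊢
    rw [← p1]; ring
  have key' : ∀ r : R, ∃ z : ℤ, c r = z := by
    rintro ⟨_, j, rfl⟩
    exact key _ j rfl
  choose z hz using key'
  have : v = ∑ r : R, z r • r.1 := by
    funext x
    have := hc' x
    simp only [hz] at this
    rw [Finset.sum_apply]
    simp only [Pi.smul_apply, smul_eq_mul]
    exact_mod_cast this.symm
  rw [this]
  exact Submodule.sum_mem _ fun r _ => Submodule.smul_mem _ _ (Submodule.subset_span r.2)

end Abs

section Abs2

variable {J X Y : Type} [Fintype J] [Fintype X] [Fintype Y]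

lemma int_unit_row (v : Y → ℤ) (h : ∑ y, v y * v y = 1) :
    ∃ y, v y * v y = 1 ∧ ∀ y', y' ≠ y → v y' = 0 := by
  have : ∃ y, v y ≠ 0 := by
    by_contra hn
    push Not at hn
    simp [hn] at h
  obtain ⟨y, hy⟩ := this
  have h1 : 0 < v y * v y := mul_self_pos.2 hy
  rw [← Finset.add_sum_erase _ _ (Finset.mem_univ y)] at h
  have h2 : 0 ≤ ∑ y' ∈ Finset.univ.erase y, v y' * v y' :=
    Finset.sum_nonneg fun _ _ => mul_self_nonneg _
  refine ⟨y, by omega, fun y' hy' => ?_⟩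
  have h3 := (Finset.sum_eq_zero_iff_of_nonneg (fun _ _ => mul_self_nonneg _)).1
    (show ∑ y' ∈ Finset.univ.erase y, v y' * v y' = 0 by omega) y' (by simp [hy'])
  exact mul_self_eq_zero.1 h3

lemma abs_bij (a : Matrix J X ℤ) (b : Matrix J Y ℤ) (u : Matrix X J ℤ) (w : J → ℤ)
    (hu₀ : ∀ x y, ∑ j, u x j * a j y = if x = y then 1 else 0) (hab : a * aᵀ = b * bᵀ)
    (hs : ∀ x, 0 < ∑ j, w j * a j x) (hr : ∀ y, 0 ≤ ∑ j, w j * b j y) :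
    ∃ Φ : X → Y, Function.Injective Φ ∧ (∀ x, ∑ j, w j * b j (Φ x) = ∑ j, w j * a j x) ∧
      ∀ y, (∀ x, Φ x ≠ y) → ∑ j, w j * b j y = 0 := by
  have hu : u * a = 1 := by
    ext x y
    rw [Matrix.mul_apply, Matrix.one_apply]
    exact hu₀ x y
  set V : Matrix X Y ℤ := u * b with hV
  have hu' : aᵀ * uᵀ = 1 := by rw [← Matrix.transpose_mul, hu, Matrix.transpose_one]
  have h1 : b * Vᵀ = a := by
    rw [hV, Matrix.transpose_mul, ← Matrix.mul_assoc, ← hab, Matrix.mul_assoc, hu', Matrix.mul_one]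
  have h2 : V * Vᵀ = 1 := by
    rw [hV, Matrix.mul_assoc, ← hV, h1, hu]
  have h3 : V * bᵀ = aᵀ := by
    rw [← h1, Matrix.transpose_mul, Matrix.transpose_transpose]
  have h4 : (b - a * V) * (b - a * V)ᵀ = 0 := by
    rw [Matrix.transpose_sub, Matrix.transpose_mul, Matrix.sub_mul, Matrix.mul_sub, Matrix.mul_sub,
      ← hab, ← Matrix.mul_assoc b, h1, Matrix.mul_assoc a V bᵀ, h3, Matrix.mul_assoc a V,
      ← Matrix.mul_assoc V, h2, Matrix.one_mul]
    simp
  have h5 : b = a * V := by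
    rw [← sub_eq_zero]
    ext j y
    have := congrFun (congrFun h4 j) j
    rw [Matrix.mul_apply] at this
    simp only [Matrix.transpose_apply, Matrix.zero_apply] at this
    have h6 := (Finset.sum_eq_zero_iff_of_nonneg (fun _ _ => mul_self_nonneg _)).1 this y
      (Finset.mem_univ _)
    exact mul_self_eq_zero.1 h6
  have hrs : ∀ y, ∑ j, w j * b j y = ∑ x, (∑ j, w j * a j x) * V x y := by
    intro y
    rw [h5]
    simp only [Matrix.mul_apply, Finset.mul_sum, Finset.sum_mul]
    rw [Finset.sum_comm]
    refine Finset.sum_congr rfl fun x _ => Finset.sum_congr rfl fun j _ => by ring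
  have hrow : ∀ x, ∑ y, V x y * V x y = 1 := by
    intro x
    have := congrFun (congrFun h2 x) x
    rw [Matrix.mul_apply] at this
    simpa using this
  choose Φ hΦ1 hΦ0 using fun x => int_unit_row (V x) (hrow x)
  have hne : ∀ x, V x (Φ x) ≠ 0 := by
    intro x e
    have := hΦ1 x
    rw [e] at this
    simp at this
  have hinj : Function.Injective Φ := by
    intro x x' e
    by_contra hxx
    have := congrFun (congrFun h2 x) x'
    rw [Matrix.mul_apply, Matrix.one_apply_ne hxx, Finset.sum_eq_single (Φ x)] at this
    · have h7 := hne x'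
      rw [← e] at h7
      exact mul_ne_zero (hne x) h7 this
    · intro y _ hy
      rw [hΦ0 x y hy, zero_mul]
    · simp
  have hr1 : ∀ x, ∑ j, w j * b j (Φ x) = (∑ j, w j * a j x) * V x (Φ x) := by
    intro x
    rw [hrs, Finset.sum_eq_single x]
    · intro x' _ hx'
      rw [hΦ0 x', mul_zero]
      exact fun e => hx' (hinj e).symm
    · simp
  refine ⟨Φ, hinj, fun x => ?_, fun y hy => ?_⟩
  · have h8 := hr (Φ x)
    rw [hr1] at h8
    have h9 : 0 ≤ V x (Φ x) := by
      by_contra hn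
      push Not at hn
      have := mul_neg_of_pos_of_neg (hs x) hn
      omega
    have h10 : V x (Φ x) = 1 := by
      have := hΦ1 x
      rcases mul_self_eq_one_iff.1 this with h | h
      · exact h
      · omega
    rw [hr1, h10, mul_one]
  · rw [hrs]
    refine Finset.sum_eq_zero fun x _ => ?_
    rw [hΦ0 x y (hy x).symm, mul_zero]

end Abs2

section Final

lemma irr_deg {G : Type} [Group G] [Fintype G] (V : FDRep ℂ G) [Simple V] :
    0 < Module.finrank ℂ V := by
  by_contra h0
  have h1 : Module.finrank ℂ V = 0 := by omega
  have : Subsingleton V := Module.finrank_zero_iff.1 h1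
  have h2 := irr_ip (χ := V.character) (ψ := V.character) ⟨V, inferInstance, rfl⟩
    ⟨V, inferInstance, rfl⟩
  have h3 : V.character = 0 := by
    funext g
    have : V.ρ g = 0 := Subsingleton.elim _ _
    simp [FDRep.character, this]
  rw [h3] at h2
  simp [ip] at h2

lemma transport {G H : Type} [Group G] [Group H] [Fintype G] [Fintype H] (e : G ≃* H) (p : ℕ)
    {χ : H → ℂ} (h : χ ∈ IrrCoprime p H) : (fun g => χ (e g)) ∈ IrrCoprime p G := by
  obtain ⟨V, hV, rfl, hd⟩ := h
  refine ⟨FDRep.of (V.ρ.comp e.toMonoidHom), ?_, ?_, hd⟩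
  · rw [FDRep.simple_iff_char_is_norm_one] at hV ⊢
    rw [Nat.card_congr e.toEquiv, ← hV]
    refine Fintype.sum_equiv e.toEquiv _ _ fun g => ?_
    have : e.toEquiv g⁻¹ = (e.toEquiv g)⁻¹ := map_inv e g
    rw [← this]
    rfl
  · rfl

lemma transport_equiv {G H : Type} [Group G] [Group H] [Fintype G] [Fintype H] (e : G ≃* H)
    (p : ℕ) : Nonempty (IrrCoprime p H ≃ IrrCoprime p G) :=
  ⟨{ toFun := fun χ => ⟨_, transport e p χ.2⟩
     invFun := fun χ => ⟨_, transport e.symm p χ.2⟩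
     left_inv := fun χ => by ext g; simp
     right_inv := fun χ => by ext g; simp }⟩

lemma mem_coprime {G : Type} [Group G] [Fintype G] {p : ℕ} (χ : Irr G) (d : ℕ)
    (hd : χ.1 1 = d) : χ.1 ∈ IrrCoprime p G ↔ Nat.Coprime d p := by
  constructor
  · rintro ⟨V, hV, hχ, hc⟩
    rw [← hχ, FDRep.char_one] at hd
    have : Module.finrank ℂ V = d := by exact_mod_cast hd
    rwa [← this]
  · intro hc
    obtain ⟨V, hV, hχ⟩ := χ.2
    rw [← hχ, FDRep.char_one] at hd
    have : Module.finrank ℂ V = d := by exact_mod_cast hd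
    exact ⟨V, hV, hχ, by rwa [this]⟩

variable {F : Type} [Field F] [Fintype F] {n : ℕ}

theorem exists_Phi : ∃ Φ : Irr (Mon Fˣ n) → Irr (GL (Fin n) F), Function.Injective Φ ∧
    (∀ ψ, mult (UT 0 ∅) 1 (Φ ψ).1 = ψ.1 1) ∧
    ∀ χ : Irr (GL (Fin n) F), (∀ ψ, Φ ψ ≠ χ) → mult (UT 0 ∅) 1 χ.1 = 0 := by
  let J := (Fin n → Fin n) × (Fin n → (Fˣ →* ℂˣ))
  have ha : ∀ (j : J) (ψ : Irr (Mon Fˣ n)), ∃ k : ℕ,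
      mult (Mc Fˣ j.1) (th j.1 j.2 1) ψ.1 = k := fun j ψ => mult_nat _ _ ψ.2
  have hb : ∀ (j : J) (χ : Irr (GL (Fin n) F)), ∃ k : ℕ,
      mult (Pc F j.1) (chi j.1 j.2) χ.1 = k := fun j χ => mult_nat _ _ χ.2
  have he : ∀ (j : J) (ψ : Irr (Mon Fˣ n)), ∃ k : ℕ,
      mult (Mc Fˣ (dc j.1 j.2)) (th (dc j.1 j.2) Prod.fst (sgn n)) ψ.1 = k :=
    fun j ψ => mult_nat _ _ ψ.2
  choose a ha using ha
  choose b hb using hb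
  choose e he using he
  obtain ⟨u, hu⟩ := abs_integral (J := J) (X := Irr (Mon Fˣ n)) (fun j ψ => (a j ψ : ℤ))
    (fun j ψ => (e j ψ : ℤ)) (fun j => Psi j.1) (by
      intro f hf
      have hcl : IsClass (∑ ψ : Irr (Mon Fˣ n), f ψ • ψ.1) := by
        intro g h
        simp only [Finset.sum_apply, Pi.smul_apply]
        refine Finset.sum_congr rfl fun ψ _ => ?_
        rw [irr_class ψ.2 g h]
      have h0 := mon_inj hcl (fun c α => by
        rw [mult_sum]
        have := hf (c, α)
        rw [← this]
        refine Finset.sum_congr rfl fun ψ _ => ?_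
        rw [ha (c, α) ψ, mul_comm]
        simp)
      have hind := irr_indep (G := Mon Fˣ n)
      rw [Fintype.linearIndependent_iff] at hind
      funext ψ
      exact hind f h0 ψ) (by
      intro j
      have := N_diag (K := Fˣ) (c := j.1) (α := j.2)
      simp only [ha j, he j] at this
      exact_mod_cast this) (by
      intro j j' hj
      have := N_tri (K := Fˣ) (c := j.1) (α := j.2) (c' := j'.1) (α' := j'.2) (by
        simp only [ha j, he j']
        exact_mod_cast hj)
      refine this.imp id fun h => ?_
      funext ψ
      have := h ψ
      rw [ha j, ha j'] at this
      exact_mod_cast this)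
  have hsw : ∀ g : J → ℂ, ∑ j : J, ((if j.1 = id then (1 : ℤ) else 0 : ℤ) : ℂ) * g j =
      ∑ θ : Fin n → (Fˣ →* ℂˣ), g (id, θ) := by
    intro g
    rw [Fintype.sum_prod_type, Finset.sum_eq_single id]
    · simp
    · intro c _ hc
      simp [hc]
    · simp
  have hs : ∀ ψ : Irr (Mon Fˣ n),
      ((∑ j : J, (if j.1 = id then (1 : ℤ) else 0) * (a j ψ : ℤ) : ℤ) : ℂ) = ψ.1 1 := by
    intro ψ
    have := hsw (fun j => (a j ψ : ℂ))
    push_cast at this ⊢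
    rw [this, ← sum_theta_M ψ.1]
    refine Finset.sum_congr rfl fun θ _ => ?_
    exact (ha (id, θ) ψ).symm
  have hr : ∀ χ : Irr (GL (Fin n) F),
      ((∑ j : J, (if j.1 = id then (1 : ℤ) else 0) * (b j χ : ℤ) : ℤ) : ℂ) =
        mult (UT 0 ∅) 1 χ.1 := by
    intro χ
    have := hsw (fun j => (b j χ : ℂ))
    push_cast at this ⊢
    rw [this, ← sum_theta_G χ.1]
    refine Finset.sum_congr rfl fun θ _ => ?_
    exact (hb (id, θ) χ).symm
  obtain ⟨Φ, h1, h2, h3⟩ := abs_bij (J := J) (Matrix.of fun j ψ => (a j ψ : ℤ))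
    (Matrix.of fun j χ => (b j χ : ℤ)) (Matrix.of u) (fun j => if j.1 = id then (1 : ℤ) else 0) (fun ψ ψ' => hu ψ ψ') (by
      ext j j'
      rw [Matrix.mul_apply, Matrix.mul_apply]
      simp only [Matrix.transpose_apply, Matrix.of_apply]
      have e1 := parseval (Mc Fˣ j.1) (Mc Fˣ j'.1) (th j.1 j.2 1) (th j'.1 j'.2 1)
      have e2 := parseval (Pc F j.1) (Pc F j'.1) (chi j.1 j.2) (chi j'.1 j'.2)
      rw [ker_G_M, ← e1] at e2
      simp only [ha j, ha j', hb j, hb j'] at e2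
      exact_mod_cast e2.symm) (by
      intro ψ
      have := hs ψ
      obtain ⟨V, hV, hχ⟩ := ψ.2
      have hp := irr_deg V
      rw [← hχ, FDRep.char_one] at this
      have : (∑ j : J, (if j.1 = id then (1 : ℤ) else 0) * (a j ψ : ℤ) : ℤ) =
        Module.finrank ℂ V := by exact_mod_cast this
      simp only [Matrix.of_apply]
      rw [this]; exact_mod_cast hp) (by
      intro χ
      refine Finset.sum_nonneg fun j _ => ?_
      simp only [Matrix.of_apply]
      positivity)
  refine ⟨Φ, h1, fun ψ => ?_, fun χ hχ => ?_⟩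
  · rw [← hr, ← hs]
    exact congrArg _ (h2 ψ)
  · rw [← hr]
    have := h3 χ hχ
    simp only [Matrix.of_apply] at this
    rw [this]; simp

lemma coprime_congr {d r q : ℕ} (z : ℤ) (h3 : 3 ∣ q) (h : (d : ℤ) - r = q * z) :
    Nat.Coprime d 3 ↔ Nat.Coprime r 3 := by
  have key : ∀ m : ℕ, Nat.Coprime m 3 ↔ ¬ 3 ∣ m := fun m => by
    rw [Nat.coprime_comm]; exact Nat.Prime.coprime_iff_not_dvd Nat.prime_three
  rw [key, key, not_iff_not]
  obtain ⟨k, rfl⟩ := h3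
  have : (d : ℤ) - r = 3 * (k * z) := by rw [h]; push_cast; ring
  omega

theorem main_mon (h3 : 3 ∣ Nat.card Fˣ) :
    Nonempty (IrrCoprime 3 (GL (Fin n) F) ≃ IrrCoprime 3 (Mon Fˣ n)) := by
  obtain ⟨Φ, h1, h2, h4⟩ := exists_Phi (F := F) (n := n)
  have hdeg : ∀ {G : Type} [Group G] [Fintype G] (χ : Irr G), ∃ d : ℕ, χ.1 1 = d := by
    intro G _ _ χ
    obtain ⟨V, _, hχ⟩ := χ.2
    exact ⟨Module.finrank ℂ V, by rw [← hχ, FDRep.char_one]⟩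
  have hirr : ∀ {G : Type} [Group G] {χ : G → ℂ}, χ ∈ IrrCoprime 3 G → χ ∈ Irr G := by
    rintro G _ χ ⟨V, hV, hχ, _⟩
    exact ⟨V, hV, hχ⟩
  have hcop : ∀ (χ : Irr (GL (Fin n) F)) (r : ℕ), mult (UT 0 ∅) 1 χ.1 = r →
      (χ.1 ∈ IrrCoprime 3 (GL (Fin n) F) ↔ Nat.Coprime r 3) := by
    intro χ r hr
    obtain ⟨d, hd⟩ := hdeg χ
    rw [mem_coprime χ d hd]
    obtain ⟨z, hz⟩ := degree_mod' χ.2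
    rw [hd, hr] at hz
    exact coprime_congr z h3 (by exact_mod_cast hz)
  have hmem : ∀ ψ : Irr (Mon Fˣ n), (Φ ψ).1 ∈ IrrCoprime 3 (GL (Fin n) F) ↔
      ψ.1 ∈ IrrCoprime 3 (Mon Fˣ n) := by
    intro ψ
    obtain ⟨d, hd⟩ := hdeg ψ
    rw [mem_coprime ψ d hd, hcop _ d ((h2 ψ).trans hd)]
  let T : IrrCoprime 3 (Mon Fˣ n) → IrrCoprime 3 (GL (Fin n) F) := fun ψ =>
    ⟨(Φ ⟨ψ.1, hirr ψ.2⟩).1, (hmem _).2 ψ.2⟩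
  refine ⟨(Equiv.ofBijective T ⟨?_, ?_⟩).symm⟩
  · intro ψ ψ' e
    have e1 : (Φ ⟨ψ.1, hirr ψ.2⟩).1 = (Φ ⟨ψ'.1, hirr ψ'.2⟩).1 :=
      congrArg (fun x : IrrCoprime 3 (GL (Fin n) F) => x.1) e
    have e2 := h1 (Subtype.ext e1)
    exact Subtype.ext (congrArg (fun x : Irr (Mon Fˣ n) => x.1) e2)
  · intro χ
    by_contra hn
    push Not at hn
    have hr := h4 ⟨χ.1, hirr χ.2⟩ (by
      intro ψ e
      refine hn ⟨ψ.1, (hmem ψ).1 (by rw [e]; exact χ.2)⟩ (Subtype.ext ?_)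
      exact congrArg (fun x : Irr (GL (Fin n) F) => x.1) e)
    have := (hcop ⟨χ.1, hirr χ.2⟩ 0 (by rw [hr]; simp)).1 χ.2
    norm_num at this

theorem main_M (M : Subgroup (GL (Fin n) F))
    (hM : ∀ A : GL (Fin n) F, A ∈ M ↔
      (∀ i : Fin n, ∃! j : Fin n, (A : Matrix (Fin n) (Fin n) F) i j ≠ 0) ∧
      (∀ j : Fin n, ∃! i : Fin n, (A : Matrix (Fin n) (Fin n) F) i j ≠ 0)) :
    Nonempty (M ≃* Mon Fˣ n) := by
  have hrange : M = (io F n).range := by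
    ext g
    rw [hM, MonoidHom.mem_range]
    constructor
    · rintro ⟨h1, h2⟩
      apply io_surj
      intro s
      obtain ⟨i, hi, hi'⟩ := h2 s
      refine ⟨i, hi, fun i' hne => ?_, fun s' hne => ?_⟩
      · by_contra hc
        exact hne (hi' i' hc)
      · by_contra hc
        obtain ⟨j, hj, hj'⟩ := h1 i
        exact hne ((hj' s' hc).trans (hj' s hi).symm)
    · rintro ⟨x, rfl⟩
      have hne : ∀ i j, (io F n x).1 i j ≠ 0 ↔ i = x.w j := by
        intro i j
        rw [io_apply]
        by_cases h : i = x.w j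
        · rw [if_pos h]; simp [h]
        · rw [if_neg h]; simp [h]
      constructor
      · intro i
        refine ⟨x.w.symm i, (hne _ _).2 (by simp), fun j hj => ?_⟩
        rw [(hne _ _).1 hj]; simp
      · intro j
        exact ⟨x.w j, (hne _ _).2 rfl, fun i hi => (hne _ _).1 hi⟩
  subst hrange
  exact ⟨(MonoidHom.ofInjective io_inj).symm⟩

end Final

end GLMon

/-- Let `F` be a finite field with `q` elements where `3 ∣ q - 1`, let `n ≥ 1`, and let
`M ≤ GL_n(F)` be the subgroup of monomial matrices (matrices with exactly one nonzero entry
in each row and each column), so `M ≅ GL_1(F) ≀ S_n`.  Then there is a bijection between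
`Irr_{3'}(GL_n(F))` and `Irr_{3'}(M)`. -/
theorem global_bijection_GL_monomial (n q : ℕ) (hn : 0 < n) (F : Type) [Field F] [Fintype F]
    (hF : Fintype.card F = q) (h3 : 3 ∣ q - 1)
    (M : Subgroup (GL (Fin n) F))
    (hM : ∀ A : GL (Fin n) F, A ∈ M ↔
      (∀ i : Fin n, ∃! j : Fin n, (A : Matrix (Fin n) (Fin n) F) i j ≠ 0) ∧
      (∀ j : Fin n, ∃! i : Fin n, (A : Matrix (Fin n) (Fin n) F) i j ≠ 0)) :
    Nonempty ((IrrCoprime 3 (GL (Fin n) F)) ≃ (IrrCoprime 3 ↥M)) := by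
  have h : 3 ∣ Nat.card Fˣ := by
    rw [Nat.card_units, Nat.card_eq_fintype_card, hF]
    exact h3
  obtain ⟨e⟩ := GLMon.main_M M hM
  obtain ⟨f⟩ := GLMon.main_mon (n := n) h
  obtain ⟨g⟩ := GLMon.transport_equiv e 3
  exact ⟨f.trans g⟩
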